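/- Let G be a countably infinite discrete amenable group, X an infinite compact metrizable space, and α: G ↷ X a minimal free continuous action such that E_G(X) is compact and zero-dimensional in the weak* topology. Then the following are equivalent: (i) α is almost finite; (ii) α is m-almost finite for some m ≥ 0; (iii) α has dynamical comparison; (iv) α has dynamical m-comparison for some m ≥ 0. -/

import Mathlib

open MeasureTheory Set Pointwise

variable (G X : Type*)

section Defs

variable [Group G] [MetricSpace X] [MeasurableSpace X] [MulAction G X]

/-- A Borel probability measure is `G`-invariant. -/
def InvariantMeasure (μ : ProbabilityMeasure X) : Prop :=
  ∀ g : G, MeasureTheory.Measure.map (fun x => g • x) (μ : Measure X) = (μ : Measure X)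

/-- `M_G(X)`: the set of `G`-invariant Borel probability measures on `X`. -/
def MG : Set (ProbabilityMeasure X) := {μ | InvariantMeasure G X μ}

/-- `E_G(X)`: the set of ergodic `G`-invariant Borel probability measures on `X`,
i.e. invariant measures giving every `G`-invariant Borel set measure `0` or `1`. -/
def EG : Set (ProbabilityMeasure X) :=
  {μ | InvariantMeasure G X μ ∧
    ∀ A : Set X, MeasurableSet A → (∀ g : G, g • A = A) → μ A = 0 ∨ μ A = 1}

/-- The action of `G` on `X` is free. -/
def FreeAction : Prop := ∀ (g : G) (x : X), g • x = x → g = 1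

/-- The action of `G` on `X` is minimal: there is no proper nonempty closed invariant subset. -/
def MinimalAction : Prop :=
  ∀ C : Set X, IsClosed C → (∀ g : G, g • C ⊆ C) → C = ∅ ∨ C = Set.univ

/-- The small boundary property. -/
def SmallBoundaryProperty : Prop :=
  ∀ (x : X) (U : Set X), IsOpen U → x ∈ U →
    ∃ V : Set X, IsOpen V ∧ x ∈ V ∧ V ⊆ U ∧ ∀ μ ∈ MG G X, μ (frontier V) = 0

/-- `S` is a `(K,δ)`-invariant finite subset of `G`. -/
def FolnerInv (K : Finset G) (δ : ℝ) (S : Finset G) : Prop :=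
  (1 - δ) * (S.card : ℝ) ≤ ({s | s ∈ S ∧ ∀ k ∈ K, k * s ∈ S} : Set G).ncard

/-- `G` is amenable: it admits `(K,δ)`-invariant nonempty finite subsets for all `K, δ`. -/
def AmenableGroup : Prop :=
  ∀ (K : Finset G) (δ : ℝ), 0 < δ → ∃ S : Finset G, S.Nonempty ∧ FolnerInv G K δ S

/-- `(S, V)` is a tower: the translates `s • V`, `s ∈ S`, are pairwise disjoint. -/
def IsTower (S : Finset G) (V : Set X) : Prop :=
  (S : Set G).Pairwise fun s t => Disjoint (s • V) (t • V)

/-- `F ≺_m O`: subordination with `m`-colored multiplicity. -/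
def SubordinateM (m : ℕ) (F O : Set X) : Prop :=
  ∃ (n : ℕ) (U : Fin n → Set X) (s : Fin n → G) (c : Fin n → Fin (m + 1)),
    (∀ k, IsOpen (U k)) ∧ F ⊆ ⋃ k, U k ∧ (∀ k, s k • U k ⊆ O) ∧
    ∀ k l, k ≠ l → c k = c l → Disjoint (s k • U k) (s l • U l)

/-- The action has dynamical `m`-comparison. -/
def HasMComparison (m : ℕ) : Prop :=
  ∀ F O : Set X, IsClosed F → IsOpen O →
    (∀ μ ∈ MG G X, μ F < μ O) → SubordinateM G X m F O

/-- The action is `m`-almost finite. -/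
def MAlmostFinite (m : ℕ) : Prop :=
  ∀ (n : ℕ), 1 ≤ n → ∀ (K : Finset G) (δ : ℝ), 0 < δ →
    ∃ (I : ℕ) (S : Fin I → Finset G) (V : Fin I → Set X) (c : Fin I → Fin (m + 1))
      (S' : Fin I → Finset G),
      (∀ i, IsOpen (V i)) ∧
      (∀ i, IsTower G X (S i) (closure (V i))) ∧
      (∀ i, FolnerInv G K δ (S i)) ∧
      (∀ i, ∀ s ∈ S i, Metric.diam (s • closure (V i)) < δ) ∧
      (∀ i j, i ≠ j → c i = c j →
        Disjoint ((S i : Set G) • closure (V i)) ((S j : Set G) • closure (V j))) ∧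
      (∀ i, S' i ⊆ S i) ∧ (∀ i, ((S' i).card : ℝ) ≤ (S i).card / n) ∧
      SubordinateM G X 0 (Set.univ \ ⋃ i, (S i : Set G) • V i) (⋃ i, (S' i : Set G) • V i)

end Defs

/-!
Comparison passes from invariant measures to orbits: if `μ F < μ O` for every invariant `μ`, then
along a sufficiently invariant finite set every orbit visits `O` more often than `F`, by a fixed
proportion, since limits of empirical measures are invariant. Hence every tower of a fine castle
has more levels inside `O` than levels meeting `F`, with room for the small part of the remainder,
and matching levels injectively gives `m`-almost finite ⇒ `m`-comparison.

Conversely, the Ornstein–Weiss tower theorem gives each ergodic measure an open castle of almost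
full measure, which also serves the nearby ergodic measures. By the mean ergodic theorem, disjoint
compact sets of ergodic measures are carried by disjoint open sets up to a small error, so that
castles for two such sets can be glued; as `E_G(X)` is compact and zero-dimensional, finitely many
gluings give one castle for all ergodic measures, and by Krein–Milman for all invariant measures.
Then `m`-comparison moves the remainder into few levels of each tower, and spreading the `m + 1`
colours over disjoint blocks of levels turns `≺_m` into `≺`.
-/

open Filter Topology

variable {G X}

section Folner

variable [Group G] {K F S T : Finset G} {δ δ' ε : ℝ}

lemma folnerInv_iff [DecidableEq G] :
    FolnerInv G K δ S ↔ (1 - δ) * S.card ≤ (S.filter fun s ↦ ∀ k ∈ K, k * s ∈ S).card := by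
  rw [FolnerInv, ← ncard_coe_finset (S.filter _), Finset.coe_filter]

lemma FolnerInv.mono {L : Finset G} (h : FolnerInv G L δ' S) (hK : K ⊆ L) (hδ : δ' ≤ δ) :
    FolnerInv G K δ S := by
  classical
  rw [folnerInv_iff] at h ⊢
  have hcard : (1 - δ) * (S.card : ℝ) ≤ (1 - δ') * S.card := by gcongr
  refine hcard.trans (h.trans ?_)
  gcongr with s

lemma FolnerInv.card_smul_sdiff_le [DecidableEq G] (h : FolnerInv G K δ S) {g : G} (hg : g ∈ K) :
    ((g • S) \ S).card ≤ δ * S.card := by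
  rw [folnerInv_iff] at h
  have hsub : (S.filter fun s ↦ ∀ k ∈ K, k * s ∈ S).card ≤ ((g • S) ∩ S).card := by
    rw [← Finset.card_smul_finset g (S.filter _)]
    refine Finset.card_le_card fun t ht ↦ ?_
    obtain ⟨s, hs, rfl⟩ := Finset.mem_smul_finset.1 ht
    obtain ⟨hs, hK⟩ := Finset.mem_filter.1 hs
    exact Finset.mem_inter.2 ⟨Finset.smul_mem_smul_finset hs, hK g hg⟩
  have hsum := Finset.card_sdiff_add_card_inter (g • S) S
  rw [Finset.card_smul_finset] at hsum
  have hsub' : ((S.filter fun s ↦ ∀ k ∈ K, k * s ∈ S).card : ℝ) ≤ ((g • S) ∩ S).card := by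
    exact_mod_cast hsub
  have hsum' : (((g • S) \ S).card : ℝ) + ((g • S) ∩ S).card = S.card := by exact_mod_cast hsum
  linarith

lemma FolnerInv.abs_sum_sub_sum_le (h : FolnerInv G K δ S) {g : G} (hg : g ∈ K) {f : G → ℝ}
    {M : ℝ} (hM : ∀ s, |f s| ≤ M) :
    |∑ s ∈ S, f (g * s) - ∑ s ∈ S, f s| ≤ 2 * δ * S.card * M := by
  classical
  have hM0 : 0 ≤ M := (abs_nonneg _).trans (hM 1)
  have hshift : ∑ s ∈ S, f (g * s) = ∑ t ∈ g • S, f t := by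
    rw [Finset.smul_finset_def, Finset.sum_image (MulAction.injective g).injOn]
    rfl
  have hbound (W : Finset G) : |∑ t ∈ W, f t| ≤ W.card * M := by
    simpa using (Finset.abs_sum_le_sum_abs f W).trans (Finset.sum_le_sum fun t _ ↦ hM t)
  have hcard := h.card_smul_sdiff_le hg
  have hcard' : (S \ (g • S)).card ≤ δ * S.card := by
    rwa [← Finset.card_sdiff_comm (Finset.card_smul_finset g S)]
  rw [hshift, ← Finset.sum_sdiff_sub_sum_sdiff]
  calc |∑ t ∈ (g • S) \ S, f t - ∑ t ∈ S \ (g • S), f t|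
      ≤ ((g • S) \ S).card * M + (S \ (g • S)).card * M :=
        (abs_sub _ _).trans (add_le_add (hbound _) (hbound _))
    _ ≤ δ * S.card * M + δ * S.card * M := by gcongr
    _ = 2 * δ * S.card * M := by ring

lemma FolnerInv.card_le (h : FolnerInv G K δ S) (hδ : δ < 1) (hS : S.Nonempty) :
    K.card ≤ S.card := by
  classical
  rw [folnerInv_iff] at h
  have hpos : (0 : ℝ) < (S.filter fun s ↦ ∀ k ∈ K, k * s ∈ S).card :=
    (mul_pos (sub_pos.2 hδ) (by exact_mod_cast hS.card_pos)).trans_le h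
  obtain ⟨s, hs⟩ := Finset.card_pos.1 (by exact_mod_cast hpos)
  exact Finset.card_le_card_of_injOn (· * s) (Finset.mem_filter.1 hs).2
    (mul_left_injective s).injOn

/-- The points of `F` whose `K`-translates stay in `F` but which fail this for `S` lie in
`D ∪ K⁻¹ D`, where `D = F \ S`. -/
lemma FolnerInv.of_subset (hF : FolnerInv G K (δ / 2) F)
    (hε : (K.card + 1) * ε ≤ δ / 2) (hS : S ⊆ F) (hcard : (1 - ε) * F.card ≤ S.card) :
    FolnerInv G K δ S := by
  classical
  rcases le_total 1 δ with hδ | hδ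
  · exact (mul_nonpos_of_nonpos_of_nonneg (sub_nonpos.2 hδ) (by positivity)).trans (by positivity)
  rw [folnerInv_iff] at hF ⊢
  set D := F \ S with hD
  have hDcard : (D.card : ℝ) ≤ ε * F.card := by
    have : (D.card : ℝ) + S.card = F.card := by
      exact_mod_cast Finset.card_sdiff_add_card_eq_card hS
    linarith
  have hsub : (F.filter fun s ↦ ∀ k ∈ K, k * s ∈ F) ⊆
      (S.filter fun s ↦ ∀ k ∈ K, k * s ∈ S) ∪ (D ∪ K.biUnion fun k ↦ k⁻¹ • D) := by
    intro s hs
    simp only [Finset.mem_filter, Finset.mem_union, Finset.mem_biUnion,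
      Finset.mem_inv_smul_finset_iff, smul_eq_mul, hD, Finset.mem_sdiff] at hs ⊢
    grind
  have hboundary : (D ∪ K.biUnion fun k ↦ k⁻¹ • D).card ≤ D.card + K.card * D.card :=
    (Finset.card_union_le _ _).trans <| by
      gcongr
      exact Finset.card_biUnion_le_card_mul _ _ _ fun k _ ↦ (Finset.card_smul_finset _ _).le
  have hcover : ((F.filter fun s ↦ ∀ k ∈ K, k * s ∈ F).card : ℝ) ≤
      (S.filter fun s ↦ ∀ k ∈ K, k * s ∈ S).card + (D.card + K.card * D.card) := by
    exact_mod_cast (Finset.card_le_card hsub).trans ((Finset.card_union_le _ _).trans <| by gcongr)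
  have hD' : (D.card : ℝ) + K.card * D.card ≤ δ / 2 * F.card :=
    calc (D.card : ℝ) + K.card * D.card ≤ (K.card + 1) * (ε * F.card) := by
          rw [← one_add_mul, add_comm]
          gcongr
      _ = (K.card + 1) * ε * F.card := by ring
      _ ≤ δ / 2 * F.card := by gcongr
  have hle : (1 - δ) * (S.card : ℝ) ≤ (1 - δ) * F.card := by gcongr
  linarith

end Folner

section Semicontinuity

variable [TopologicalSpace X] [MeasurableSpace X] [HasOuterApproxClosed X]
  [OpensMeasurableSpace X]
  {μ : ProbabilityMeasure X} {a : ℝ}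

lemma eventually_lt_measureReal_of_isOpen {U : Set X} (hU : IsOpen U)
    (h : a < (μ : Measure X).real U) :
    ∀ᶠ ν : ProbabilityMeasure X in 𝓝 μ, a < (ν : Measure X).real U := by
  rcases lt_or_ge a 0 with ha | ha
  · exact .of_forall fun ν ↦ ha.trans_le measureReal_nonneg
  have hlt (ν : ProbabilityMeasure X) :
      ENNReal.ofReal a < (ν : Measure X) U ↔ a < (ν : Measure X).real U :=
    ENNReal.ofReal_lt_iff_lt_toReal ha (by finiteness)
  simp only [← hlt] at h ⊢
  exact eventually_lt_of_lt_liminf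
    (h.trans_le (ProbabilityMeasure.le_liminf_measure_open_of_tendsto tendsto_id hU))

lemma eventually_measureReal_lt_of_isClosed {C : Set X} (hC : IsClosed C)
    (h : (μ : Measure X).real C < a) :
    ∀ᶠ ν : ProbabilityMeasure X in 𝓝 μ, (ν : Measure X).real C < a := by
  have hcompl (ν : ProbabilityMeasure X) :
      (ν : Measure X).real Cᶜ = 1 - (ν : Measure X).real C :=
    probReal_compl_eq_one_sub hC.measurableSet
  have hlt : 1 - a < (μ : Measure X).real Cᶜ := by rw [hcompl]; linarith
  filter_upwards [eventually_lt_measureReal_of_isOpen hC.isOpen_compl hlt] with ν hν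
  rw [hcompl] at hν
  linarith

end Semicontinuity

section InvariantMeasures

variable [Group G] [TopologicalSpace X] [MulAction G X] [ContinuousConstSMul G X]

/-- The translate `x ↦ f (g • x)` of a continuous function, as a linear map in `f`. -/
def smulTranslate (g : G) : C(X, ℝ) →ₗ[ℝ] C(X, ℝ) :=
  (ContinuousMap.compRightAlgHom ℝ ℝ ⟨fun x : X ↦ g • x, continuous_const_smul g⟩).toLinearMap

@[simp]
lemma smulTranslate_apply (g : G) (f : C(X, ℝ)) (x : X) : smulTranslate g f x = f (g • x) := rfl

variable [MeasurableSpace X] [BorelSpace X] {μ : ProbabilityMeasure X}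

lemma integral_smulTranslate (hμ : μ ∈ MG G X) (g : G) (f : C(X, ℝ)) :
    ∫ x, smulTranslate g f x ∂(μ : Measure X) = ∫ x, f x ∂(μ : Measure X) := by
  have : AEStronglyMeasurable f (Measure.map (fun x ↦ g • x) (μ : Measure X)) :=
    f.continuous.aestronglyMeasurable
  conv_rhs => rw [← hμ g, integral_map (by fun_prop) this]
  rfl

lemma mem_MG_iff [HasOuterApproxClosed X] : μ ∈ MG G X ↔ ∀ (g : G) (f : C(X, ℝ)),
    ∫ x, smulTranslate g f x ∂(μ : Measure X) = ∫ x, f x ∂(μ : Measure X) := by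
  refine ⟨integral_smulTranslate, fun h g ↦ ?_⟩
  have : IsProbabilityMeasure (Measure.map (fun x : X ↦ g • x) (μ : Measure X)) :=
    Measure.isProbabilityMeasure_map (by fun_prop)
  refine ext_of_forall_integral_eq_of_IsFiniteMeasure fun f ↦ ?_
  rw [integral_map (by fun_prop) f.continuous.aestronglyMeasurable]
  exact h g f.toContinuousMap

lemma isClosed_MG [HasOuterApproxClosed X] [CompactSpace X] : IsClosed (MG G X) := by
  have : MG G X = ⋂ (g : G) (f : C(X, ℝ)), {μ : ProbabilityMeasure X |
      ∫ x, smulTranslate g f x ∂(μ : Measure X) = ∫ x, f x ∂(μ : Measure X)} := by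
    ext μ
    simp [mem_MG_iff]
  rw [this]
  exact isClosed_iInter fun g ↦ isClosed_iInter fun f ↦
    isClosed_eq (ProbabilityMeasure.continuous_integral_continuousMap _)
      (ProbabilityMeasure.continuous_integral_continuousMap _)

lemma smulInvariantMeasure_of_mem_MG (hμ : μ ∈ MG G X) :
    SMulInvariantMeasure G X (μ : Measure X) where
  measure_preimage_smul g s hs := by rw [← Measure.map_apply (by fun_prop) hs, hμ g]

end InvariantMeasures

section Visits

variable [Group G] [MulAction G X] {S : Finset G} {A B : Set X} {x : X} {s : G}

open Classical in
/-- The elements of the finite set `S` that send the point `x` into `A`. -/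
noncomputable def visits (S : Finset G) (A : Set X) (x : X) : Finset G :=
  S.filter fun s ↦ s • x ∈ A

@[simp]
lemma mem_visits : s ∈ visits S A x ↔ s ∈ S ∧ s • x ∈ A := by simp [visits]

end Visits

section EmpiricalMeasure

variable [Group G] [MulAction G X] [MeasurableSpace X] {S : Finset G}

/-- The empirical measure of the orbit segment `S • x`: the uniform average of the Dirac masses at
its points. -/
noncomputable def empiricalMeasure (S : Finset G) (hS : S.Nonempty) (x : X) :
    ProbabilityMeasure X :=
  ⟨(S.card : ENNReal)⁻¹ • ∑ s ∈ S, Measure.dirac (s • x), by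
    constructor
    simp [Measure.finsetSum_apply, ENNReal.inv_mul_cancel, hS.ne_empty]⟩

variable [MeasurableSingletonClass X]

lemma integral_empiricalMeasure (hS : S.Nonempty) (x : X) (f : X → ℝ) :
    ∫ y, f y ∂(empiricalMeasure S hS x : Measure X) = (S.card : ℝ)⁻¹ * ∑ s ∈ S, f (s • x) := by
  simp only [empiricalMeasure, ProbabilityMeasure.coe_mk]
  rw [integral_smul_measure, integral_finsetSum_measure fun s _ ↦ integrable_dirac (by finiteness)]
  simp [integral_dirac]

lemma card_mul_measureReal_empiricalMeasure (hS : S.Nonempty) (x : X) (A : Set X) :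
    S.card * (empiricalMeasure S hS x : Measure X).real A = (visits S A x).card := by
  have hcard : (S.card : ℝ) ≠ 0 := by exact_mod_cast hS.card_ne_zero
  classical
  simp only [empiricalMeasure, ProbabilityMeasure.coe_mk, Measure.real, Measure.smul_apply,
    Measure.finsetSum_apply, Measure.dirac_apply, smul_eq_mul, ENNReal.toReal_mul]
  simp [visits, indicator_apply, mul_inv_cancel_left₀ hcard]

end EmpiricalMeasure

section FolnerLimits

variable [Group G] [TopologicalSpace X] [MeasurableSpace X] [MulAction G X] [CompactSpace X]
  [MeasurableSingletonClass X] [ContinuousConstSMul G X]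

lemma FolnerInv.abs_integral_smulTranslate_sub_le {S K : Finset G} {δ : ℝ}
    (h : FolnerInv G K δ S) (hS : S.Nonempty) {g : G} (hg : g ∈ K) (x : X) (f : C(X, ℝ)) :
    |∫ y, smulTranslate g f y ∂(empiricalMeasure S hS x : Measure X) -
      ∫ y, f y ∂(empiricalMeasure S hS x : Measure X)| ≤ 2 * δ * ‖f‖ := by
  have hcard : (0 : ℝ) < S.card := by exact_mod_cast hS.card_pos
  have hsum := h.abs_sum_sub_sum_le hg (f := fun s ↦ f (s • x)) fun s ↦ f.norm_coe_le_norm _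
  rw [integral_empiricalMeasure, integral_empiricalMeasure, ← mul_sub, abs_mul,
    abs_of_pos (by positivity), inv_mul_le_iff₀ hcard]
  simp only [smulTranslate_apply, smul_smul]
  exact hsum.trans_eq (by ring)

variable [HasOuterApproxClosed X] [BorelSpace X]

lemma mem_MG_of_tendsto_empiricalMeasure {ι : Type*} {l : Filter ι} [l.NeBot] {S : ι → Finset G}
    (hS : ∀ i, (S i).Nonempty) (hFol : ∀ g, ∀ δ > 0, ∀ᶠ i in l, FolnerInv G {g} δ (S i))
    {x : ι → X} {μ : ProbabilityMeasure X}
    (h : Tendsto (fun i ↦ empiricalMeasure (S i) (hS i) (x i)) l (𝓝 μ)) : μ ∈ MG G X := by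
  refine mem_MG_iff.2 fun g f ↦ ?_
  have hlim (f : C(X, ℝ)) :=
    ((ProbabilityMeasure.continuous_integral_continuousMap f).tendsto μ).comp h
  have hdiff := ((hlim (smulTranslate g f)).sub (hlim f)).abs
  rw [← sub_eq_zero, ← abs_nonpos_iff]
  refine le_of_forall_pos_le_add fun ε hε ↦ ?_
  have hpos : 0 < ε / (2 * (‖f‖ + 1)) := by positivity
  refine le_of_tendsto hdiff ((hFol g _ hpos).mono fun i hi ↦ ?_)
  refine (hi.abs_integral_smulTranslate_sub_le (hS i) (Finset.mem_singleton_self g) _ f).trans ?_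
  have : ε / (2 * (‖f‖ + 1)) * (2 * (‖f‖ + 1)) = ε := div_mul_cancel₀ _ (by positivity)
  linarith

variable [T2Space X]

lemma exists_folnerInv_forall_empiricalMeasure {P : ProbabilityMeasure X → Prop}
    (hP : ∀ᶠ ν in 𝓝ˢ (MG G X), P ν) : ∃ (K : Finset G) (δ : ℝ), 0 < δ ∧
      ∀ (S : Finset G) (hS : S.Nonempty), FolnerInv G K δ S → ∀ x, P (empiricalMeasure S hS x) := by
  classical
  by_contra! hcon
  choose S hS hSF x hx using fun i : Finset G × ℕ ↦ hcon i.1 (1 / (i.2 + 1)) (by positivity)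
  let U : Ultrafilter (Finset G × ℕ) := Ultrafilter.of atTop
  have hU : (U : Filter (Finset G × ℕ)) ≤ atTop := Ultrafilter.of_le _
  let ν (i : Finset G × ℕ) : ProbabilityMeasure X := empiricalMeasure (S i) (hS i) (x i)
  obtain ⟨μ, -, hμ : Tendsto ν U (𝓝 μ)⟩ :=
    isCompact_univ.ultrafilter_le_nhds (U.map ν) (by simp)
  have hFol (g : G) (δ : ℝ) (hδ : 0 < δ) : ∀ᶠ i in atTop, FolnerInv G {g} δ (S i) := by
    obtain ⟨n, hn⟩ := exists_nat_one_div_lt hδ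
    filter_upwards [eventually_ge_atTop (({g}, n) : Finset G × ℕ)] with i hi
    refine (hSF i).mono hi.1 (le_trans ?_ hn.le)
    gcongr
    exact hi.2
  have hμM : μ ∈ MG G X :=
    mem_MG_of_tendsto_empiricalMeasure hS (fun g δ hδ ↦ hU (hFol g δ hδ)) hμ
  obtain ⟨i, hi⟩ := (hμ.eventually (hP.filter_mono (nhds_le_nhdsSet hμM))).exists
  exact hx i hi

end FolnerLimits

section Gap

variable [MetricSpace X] [MeasurableSpace X]

lemma tendsto_measureReal_cthickening [OpensMeasurableSpace X] (μ : Measure X) [IsFiniteMeasure μ]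
    {C : Set X} (hC : IsClosed C) :
    Tendsto (fun r ↦ μ.real (Metric.cthickening r C)) (𝓝[>] 0) (𝓝 (μ.real C)) :=
  (ENNReal.tendsto_toReal (by finiteness)).comp <|
    (tendsto_measure_cthickening_of_isClosed ⟨1, one_pos, by finiteness⟩ hC).mono_left
      nhdsWithin_le_nhds

variable [BorelSpace X]

lemma eventually_measureReal_cthickening_add_lt {μ : ProbabilityMeasure X} {F O : Set X}
    (hF : IsClosed F) (hO : IsOpen O) (h : μ F < μ O) :
    ∀ᶠ p : ℝ × ProbabilityMeasure X in 𝓝[>] 0 ×ˢ 𝓝 μ,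
      (p.2 : Measure X).real (Metric.cthickening p.1 F) + p.1 <
        (p.2 : Measure X).real (Metric.cthickening p.1 Oᶜ)ᶜ := by
  have hgap : (μ : Measure X).real F < 1 - (μ : Measure X).real Oᶜ := by
    rw [← probReal_compl_eq_one_sub hO.isClosed_compl.measurableSet, compl_compl]
    exact_mod_cast h
  have hlim := ((tendsto_measureReal_cthickening (μ : Measure X) hF).add
    (tendsto_nhdsWithin_of_tendsto_nhds tendsto_id)).eventually_lt
    ((tendsto_measureReal_cthickening (μ : Measure X) hO.isClosed_compl).const_sub 1)
    (by simpa using hgap)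
  obtain ⟨r, hr, hr0 : 0 < r⟩ := (hlim.and eventually_mem_nhdsWithin).exists
  rw [id, ← probReal_compl_eq_one_sub Metric.isClosed_cthickening.measurableSet] at hr
  obtain ⟨a, hFa, haO⟩ := exists_between hr
  have hν := (eventually_measureReal_lt_of_isClosed Metric.isClosed_cthickening
    (lt_sub_iff_add_lt.2 hFa)).and
    (eventually_lt_measureReal_of_isOpen Metric.isClosed_cthickening.isOpen_compl haO)
  filter_upwards [prod_mem_prod (Ioo_mem_nhdsGT hr0) hν] with p ⟨⟨_, hpr⟩, hpF, hpO⟩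
  have hF' := measureReal_mono (μ := (p.2 : Measure X)) (Metric.cthickening_mono hpr.le F)
  have hO' := measureReal_mono (μ := (p.2 : Measure X))
    (compl_subset_compl.2 (Metric.cthickening_mono hpr.le Oᶜ))
  linarith

lemma exists_eventually_measureReal_cthickening_add_lt {M : Set (ProbabilityMeasure X)}
    (hM : IsCompact M) {F O : Set X} (hF : IsClosed F) (hO : IsOpen O)
    (h : ∀ μ ∈ M, μ F < μ O) : ∃ r > 0, ∀ᶠ ν : ProbabilityMeasure X in 𝓝ˢ M,
      (ν : Measure X).real (Metric.cthickening r F) + r <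
        (ν : Measure X).real (Metric.cthickening r Oᶜ)ᶜ := by
  have hev : ∀ᶠ p : ℝ × ProbabilityMeasure X in 𝓝[>] 0 ×ˢ 𝓝ˢ M,
      (p.2 : Measure X).real (Metric.cthickening p.1 F) + p.1 <
        (p.2 : Measure X).real (Metric.cthickening p.1 Oᶜ)ᶜ := by
    rw [hM.prod_nhdsSet_eq_biSup]
    simp only [eventually_iSup]
    exact fun μ hμ ↦ eventually_measureReal_cthickening_add_lt hF hO (h μ hμ)
  obtain ⟨r, hr, hr0⟩ := (hev.curry.and eventually_mem_nhdsWithin).exists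
  exact ⟨r, hr0, hr⟩

lemma exists_folnerInv_card_visits_add_le [Group G] [MulAction G X] [ContinuousConstSMul G X]
    [CompactSpace X] {F O : Set X} (hF : IsClosed F) (hO : IsOpen O)
    (h : ∀ μ ∈ MG G X, μ F < μ O) : ∃ (K : Finset G) (δ : ℝ), 0 < δ ∧
      ∀ S : Finset G, FolnerInv G K δ S → ∀ x : X,
        ((visits S (Metric.cthickening δ F) x).card : ℝ) + δ * S.card ≤
          (visits S (Metric.cthickening δ Oᶜ)ᶜ x).card := by
  obtain ⟨r, hr, hev⟩ :=
    exists_eventually_measureReal_cthickening_add_lt isClosed_MG.isCompact hF hO h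
  obtain ⟨K, δ, hδ, hK⟩ := exists_folnerInv_forall_empiricalMeasure hev
  refine ⟨K, min r δ, lt_min hr hδ, fun S hS x ↦ ?_⟩
  rcases S.eq_empty_or_nonempty with rfl | hne
  · simp [visits]
  have hle := hK S hne (hS.mono subset_rfl (min_le_right _ _)) x
  have hcard : (0 : ℝ) < S.card := by exact_mod_cast hne.card_pos
  have hF' := measureReal_mono (μ := (empiricalMeasure S hne x : Measure X))
    (Metric.cthickening_mono (min_le_left r δ) F)
  have hO' := measureReal_mono (μ := (empiricalMeasure S hne x : Measure X))
    (compl_subset_compl.2 (Metric.cthickening_mono (min_le_left r δ) Oᶜ))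
  have hgap : (empiricalMeasure S hne x : Measure X).real (Metric.cthickening (min r δ) F) +
      min r δ ≤ (empiricalMeasure S hne x : Measure X).real (Metric.cthickening (min r δ) Oᶜ)ᶜ := by
    linarith [min_le_left r δ]
  have := mul_le_mul_of_nonneg_left hgap hcard.le
  rwa [mul_add, card_mul_measureReal_empiricalMeasure, card_mul_measureReal_empiricalMeasure,
    mul_comm] at this

end Gap

section Towers

variable [Group G] [MulAction G X]

lemma IsTower.mono {S T : Finset G} {V W : Set X} (h : IsTower G X T W) (hS : S ⊆ T)
    (hV : V ⊆ W) : IsTower G X S V := fun _ hs _ ht hne ↦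
  (h (hS hs) (hS ht) hne).mono (smul_set_mono hV) (smul_set_mono hV)

lemma disjoint_levels {ι κ : Type*} {S : ι → Finset G} {V : ι → Set X} {c : ι → κ}
    (htower : ∀ i, IsTower G X (S i) (V i))
    (hdisj : ∀ i j, i ≠ j → c i = c j → Disjoint ((S i : Set G) • V i) ((S j : Set G) • V j))
    {i j : ι} {s t : G} (hs : s ∈ S i) (ht : t ∈ S j) (hc : c i = c j) (hne : i = j → s ≠ t) :
    Disjoint (s • V i) (t • V j) := by
  by_cases hij : i = j
  · subst hij
    exact htower i hs ht (hne rfl)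
  · exact (hdisj i j hij hc).mono (smul_set_subset_smul hs) (smul_set_subset_smul ht)

end Towers

section Subordination

variable [Group G] [MulAction G X]

lemma relocate_smul_eq (r t g : G) (U V : Set X) :
    (r * t⁻¹ * g) • (U ∩ g⁻¹ • t • V) = (r * t⁻¹) • g • U ∩ r • V := by
  simp only [smul_set_inter, smul_smul, mul_assoc, mul_inv_cancel_left, inv_mul_cancel, mul_one]

lemma exists_mem_level_or_exists_mem_inter {ι κ : Type*} {S S' : ι → Finset G} {V : ι → Set X}
    {U : κ → Set X} {g : κ → G} (hcov : univ \ ⋃ i, (S i : Set G) • V i ⊆ ⋃ k, U k)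
    (hg : ∀ k, g k • U k ⊆ ⋃ i, (S' i : Set G) • V i) (x : X) :
    (∃ i, ∃ s ∈ S i, x ∈ s • V i) ∨ ∃ k i, ∃ s ∈ S' i, x ∈ U k ∩ (g k)⁻¹ • s • V i := by
  by_cases hx : x ∈ ⋃ i, (S i : Set G) • V i
  · exact .inl (by simpa [Set.mem_smul, mem_smul_set] using hx)
  · obtain ⟨k, hk⟩ := mem_iUnion.1 (hcov ⟨mem_univ _, hx⟩)
    obtain ⟨i, s, hs, hxs⟩ : ∃ i, ∃ s ∈ S' i, g k • x ∈ s • V i := by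
      simpa [Set.mem_smul, mem_smul_set] using hg k (smul_mem_smul_set hk)
    exact .inr ⟨k, i, s, hs, hk, mem_inv_smul_set_iff.2 hxs⟩

variable [MetricSpace X] [ContinuousConstSMul G X] {m : ℕ} {F O : Set X}

/-- The part of `U a` which `g a` carries into the level `t a` is moved on to the level `r a`. A
level may be used twice if the pieces were already disjoint before being moved on. -/
lemma SubordinateM.of_relocation {α ι : Type*} [Finite α] {S : ι → Finset G} {V : ι → Set X}
    {c : ι → Fin (m + 1)} (hV : ∀ i, IsOpen (V i)) (htower : ∀ i, IsTower G X (S i) (V i))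
    (hdisj : ∀ i j, i ≠ j → c i = c j → Disjoint ((S i : Set G) • V i) ((S j : Set G) • V j))
    {U : α → Set X} {g t r : α → G} {i : α → ι} (hU : ∀ a, IsOpen (U a))
    (hr : ∀ a, r a ∈ S (i a)) (hF : F ⊆ ⋃ a, U a ∩ (g a)⁻¹ • t a • V (i a))
    (hO : ∀ a, r a • V (i a) ⊆ O) (hsame : ∀ a b, a ≠ b → i a = i b → r a = r b →
      t a = t b ∧ Disjoint (g a • U a) (g b • U b)) : SubordinateM G X m F O := by
  obtain ⟨n, ⟨e⟩⟩ := Finite.exists_equiv_fin α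
  let piece (a : α) : Set X := U a ∩ (g a)⁻¹ • t a • V (i a)
  have hmove (a) : (r a * (t a)⁻¹ * g a) • piece a =
      (r a * (t a)⁻¹) • g a • U a ∩ r a • V (i a) := relocate_smul_eq _ _ _ _ _
  refine ⟨n, piece ∘ e.symm, fun k ↦ r (e.symm k) * (t (e.symm k))⁻¹ * g (e.symm k),
    fun k ↦ c (i (e.symm k)), fun k ↦ (hU _).inter (((hV _).smul _).smul _),
    hF.trans (e.symm.surjective.iUnion_comp piece).superset,
    fun k ↦ (hmove _).subset.trans (inter_subset_right.trans (hO _)), fun k l hkl hc ↦ ?_⟩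
  simp only [Function.comp_apply, hmove]
  by_cases h : i (e.symm k) = i (e.symm l) ∧ r (e.symm k) = r (e.symm l)
  · obtain ⟨ht, hd⟩ := hsame _ _ (e.symm.injective.ne hkl) h.1 h.2
    rw [← h.2, ← ht]
    exact (disjoint_smul_set.2 hd).mono inter_subset_left inter_subset_left
  · exact (disjoint_levels htower hdisj (hr _) (hr _) hc fun hi hrl ↦ h ⟨hi, hrl⟩).mono
      inter_subset_right inter_subset_right

end Subordination

section ComparisonOfAlmostFinite

variable [Group G] [MulAction G X] [MetricSpace X] {F O V : Set X}

/-- A level meeting `F` is moved as a whole, and the part of the remainder of the castle which is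
carried into a level indexed by `S' i` is moved on to the level assigned to that element. -/
lemma SubordinateM.of_levels_embedding [ContinuousConstSMul G X] {m I : ℕ} {S S' : Fin I → Finset G}
    {V : Fin I → Set X} {c : Fin I → Fin (m + 1)} (hV : ∀ i, IsOpen (V i))
    (htower : ∀ i, IsTower G X (S i) (V i))
    (hdisj : ∀ i j, i ≠ j → c i = c j → Disjoint ((S i : Set G) • V i) ((S j : Set G) • V j))
    (hrem : SubordinateM G X 0 (univ \ ⋃ i, (S i : Set G) • V i) (⋃ i, (S' i : Set G) • V i))
    (φ : ∀ i, {s // s ∈ S i ∧ (s • V i ∩ F).Nonempty} ⊕ S' i ↪ {s // s ∈ S i ∧ s • V i ⊆ O}) :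
    SubordinateM G X m F O := by
  obtain ⟨N, U, g, d, hU, hcov, hgU, hUd⟩ := hrem
  have hfin (i : Fin I) : Finite {s // s ∈ S i ∧ (s • V i ∩ F).Nonempty} :=
    ((S i).finite_toSet.subset fun _ hs ↦ hs.1).to_subtype
  let P : Type _ := Σ i, {s // s ∈ S i ∧ (s • V i ∩ F).Nonempty}
  let R : Type _ := Fin N × Σ i, S' i
  have : Finite P := inferInstanceAs (Finite (Σ _, _))
  let source : P ⊕ R → Σ i, {s // s ∈ S i ∧ (s • V i ∩ F).Nonempty} ⊕ S' i :=
    Sum.elim (fun p ↦ ⟨p.1, .inl p.2⟩) (fun p ↦ ⟨p.2.1, .inr p.2.2⟩)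
  refine .of_relocation hV htower hdisj (i := fun a ↦ (source a).1)
    (r := fun a ↦ φ _ (source a).2) (t := fun a ↦ Sum.elim (↑) (↑) (source a).2)
    (U := Sum.elim (fun p : P ↦ (p.2 : G) • V p.1) fun p : R ↦ U p.1)
    (g := Sum.elim (fun _ ↦ 1) fun p ↦ g p.1)
    (Sum.rec (fun p ↦ (hV p.1).smul _) fun p ↦ hU p.1) (fun a ↦ (φ _ (source a).2).2.1) ?_
    (fun a ↦ (φ _ (source a).2).2.2) ?_
  · intro x hx
    rcases exists_mem_level_or_exists_mem_inter hcov hgU x with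
      ⟨i, s, hs, hxs⟩ | ⟨k, i, s, hs, hxs⟩
    · exact mem_iUnion.2 ⟨.inl ⟨i, s, hs, x, hxs, hx⟩, hxs, by simpa [source] using hxs⟩
    · exact mem_iUnion.2 ⟨.inr ⟨k, i, s, hs⟩, hxs⟩
  · intro a b hab hi hr
    have hsource : source a = source b := by
      generalize source a = p, source b = q at hi hr
      obtain ⟨i, p⟩ := p
      obtain ⟨j, q⟩ := q
      obtain rfl : i = j := hi
      exact congrArg (Sigma.mk i) ((φ i).injective (Subtype.ext hr))
    refine ⟨by rw [hsource], ?_⟩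
    rcases a with ⟨i, s⟩ | ⟨k, i, s⟩ <;> rcases b with ⟨j, t⟩ | ⟨l, j, t⟩ <;> cases hsource
    · exact absurd rfl hab
    · exact hUd k l (fun hkl ↦ hab (by rw [hkl])) (Subsingleton.elim (α := Fin 1) _ _)

variable [CompactSpace X] {S S' : Finset G} {δ : ℝ}

lemma dist_smul_lt_of_diam_closure_lt {s : G} {x y : X}
    (h : Metric.diam (s • closure V) < δ) (hx : x ∈ V) (hy : y ∈ V) :
    dist (s • x) (s • y) < δ :=
  (Metric.dist_le_diam_of_mem Metric.isBounded_of_compactSpace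
    (smul_mem_smul_set (subset_closure hx)) (smul_mem_smul_set (subset_closure hy))).trans_lt h

lemma nonempty_levels_embedding (hdiam : ∀ s ∈ S, Metric.diam (s • closure V) < δ)
    (hS' : S' ⊆ S) (hcard : S'.card ≤ δ * S.card)
    (hcount : ∀ x, ((visits S (Metric.cthickening δ F) x).card : ℝ) + δ * S.card ≤
      (visits S (Metric.cthickening δ Oᶜ)ᶜ x).card) :
    Nonempty ({s // s ∈ S ∧ (s • V ∩ F).Nonempty} ⊕ S' ↪ {s // s ∈ S ∧ s • V ⊆ O}) := by
  classical
  rcases V.eq_empty_or_nonempty with rfl | ⟨x, hx⟩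
  · have : IsEmpty {s // s ∈ S ∧ (s • (∅ : Set X) ∩ F).Nonempty} := ⟨by simp⟩
    exact ⟨(Equiv.emptySum _ _).toEmbedding.trans
      ⟨fun s ↦ ⟨s, hS' s.2, by simp⟩, fun s t h ↦ Subtype.ext (by simpa using h)⟩⟩
  have hmeet (s : G) (hs : s ∈ S) (hne : (s • V ∩ F).Nonempty) :
      s ∈ visits S (Metric.cthickening δ F) x := by
    obtain ⟨_, ⟨y, hy, rfl⟩, hyF⟩ := hne
    exact mem_visits.2 ⟨hs, Metric.mem_cthickening_of_dist_le _ _ _ _ hyF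
      (dist_smul_lt_of_diam_closure_lt (hdiam s hs) hx hy).le⟩
  have hinside (s : G) (hs : s ∈ visits S (Metric.cthickening δ Oᶜ)ᶜ x) : s • V ⊆ O := by
    obtain ⟨hs, hsx⟩ := mem_visits.1 hs
    rintro _ ⟨y, hy, rfl⟩
    by_contra hyO
    exact hsx (Metric.mem_cthickening_of_dist_le _ _ _ _ hyO
      (dist_smul_lt_of_diam_closure_lt (hdiam s hs) hx hy).le)
  have hle : (visits S (Metric.cthickening δ F) x).card + S'.card ≤
      (visits S (Metric.cthickening δ Oᶜ)ᶜ x).card := by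
    have := (add_le_add_right hcard _).trans (hcount x)
    exact_mod_cast this
  obtain ⟨φ⟩ : Nonempty (visits S (Metric.cthickening δ F) x ⊕ S' ↪
      visits S (Metric.cthickening δ Oᶜ)ᶜ x) :=
    Function.Embedding.nonempty_of_card_le (by simpa using hle)
  exact ⟨(Function.Embedding.sumMap
    ⟨fun s ↦ ⟨s, hmeet s s.2.1 s.2.2⟩, fun s t h ↦ Subtype.ext (by simpa using h)⟩ (.refl _)).trans
    (φ.trans ⟨fun s ↦ ⟨s, (mem_visits.1 s.2).1, hinside s s.2⟩,
      fun s t h ↦ Subtype.ext (by simpa using h)⟩)⟩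

theorem hasMComparison_of_mAlmostFinite [ContinuousConstSMul G X] [MeasurableSpace X]
    [BorelSpace X] {m : ℕ} (h : MAlmostFinite G X m) : HasMComparison G X m := by
  intro F O hF hO hFO
  obtain ⟨K, δ, hδ, hK⟩ := exists_folnerInv_card_visits_add_le hF hO hFO
  obtain ⟨n, hn⟩ := exists_nat_one_div_lt hδ
  obtain ⟨I, S, V, c, S', hV, htower, hFol, hdiam, hdisj, hS', hcard, hrem⟩ :=
    h (n + 1) n.succ_pos K δ hδ
  have hcard' (i) : ((S' i).card : ℝ) ≤ δ * (S i).card := by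
    refine (hcard i).trans ?_
    rw [div_eq_inv_mul, Nat.cast_add_one, ← one_div]
    gcongr
  exact .of_levels_embedding hV (fun i ↦ (htower i).mono subset_rfl subset_closure)
    (fun i j hij hc ↦ (hdisj i j hij hc).mono (smul_subset_smul_left subset_closure)
      (smul_subset_smul_left subset_closure)) hrem fun i ↦
      (nonempty_levels_embedding (hdiam i) (hS' i) (hcard' i) (hK _ (hFol i))).some

end ComparisonOfAlmostFinite

section FineCastles

variable [Group G] [MulAction G X] [MetricSpace X] {K : Finset G} {δ : ℝ} {ι κ : Type*}
  {S : ι → Finset G} {B C : ι → Set X}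

/-- A castle with `(K, δ)`-invariant shapes `S i`, bases `B i` and levels of diameter less than
`δ`. -/
structure IsFineCastle (K : Finset G) (δ : ℝ) (S : ι → Finset G) (B : ι → Set X) : Prop where
  folnerInv i : FolnerInv G K δ (S i)
  isTower i : IsTower G X (S i) (B i)
  diam_lt i : ∀ s ∈ S i, Metric.diam (s • B i) < δ
  disjoint : Pairwise fun i j ↦ Disjoint ((S i : Set G) • B i) ((S j : Set G) • B j)

/-- A fine castle whose towers have the closures of the open sets `V i` as bases. -/
structure IsOpenCastle (K : Finset G) (δ : ℝ) (S : ι → Finset G) (V : ι → Set X) : Prop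
    extends IsFineCastle K δ S fun i ↦ closure (V i) where
  isOpen i : IsOpen (V i)

lemma IsFineCastle.mono [CompactSpace X] (h : IsFineCastle K δ S C) (hB : ∀ i, B i ⊆ C i) :
    IsFineCastle K δ S B where
  folnerInv := h.folnerInv
  isTower i := (h.isTower i).mono subset_rfl (hB i)
  diam_lt i s hs := (Metric.diam_mono (smul_set_mono (hB i))
    Metric.isBounded_of_compactSpace).trans_lt (h.diam_lt i s hs)
  disjoint i j hij := (h.disjoint hij).mono (smul_subset_smul_left (hB i))
    (smul_subset_smul_left (hB j))

lemma IsFineCastle.comp (h : IsFineCastle K δ S B) {f : κ → ι} (hf : f.Injective) :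
    IsFineCastle K δ (S ∘ f) (B ∘ f) where
  folnerInv i := h.folnerInv (f i)
  isTower i := h.isTower (f i)
  diam_lt i := h.diam_lt (f i)
  disjoint _ _ hij := h.disjoint (hf.ne hij)

lemma IsFineCastle.sumElim {T : κ → Finset G} {D : κ → Set X} (h : IsFineCastle K δ S B)
    (h' : IsFineCastle K δ T D) (hdisj : Disjoint (⋃ i, (S i : Set G) • B i)
      (⋃ i, (T i : Set G) • D i)) : IsFineCastle K δ (Sum.elim S T) (Sum.elim B D) where
  folnerInv := Sum.rec h.folnerInv h'.folnerInv
  isTower := Sum.rec h.isTower h'.isTower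
  diam_lt := Sum.rec h.diam_lt h'.diam_lt
  disjoint := by
    simp only [disjoint_iUnion_left, disjoint_iUnion_right] at hdisj
    rintro (i | i) (j | j) hij
    · exact h.disjoint (by simpa using hij)
    · exact hdisj j i
    · exact (hdisj i j).symm
    · exact h'.disjoint (by simpa using hij)

end FineCastles

section CastleMeasure

variable [Group G] [MulAction G X] [MeasurableSpace X] {μ : Measure X} [SMulInvariantMeasure G X μ]

lemma measureReal_smul_set (g : G) (B : Set X) : μ.real (g • B) = μ.real B := by
  simp [Measure.real, measure_smul]

lemma measureReal_finset_smul_le (S : Finset G) (B : Set X) :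
    μ.real ((S : Set G) • B) ≤ S.card * μ.real B := by
  rw [← iUnion_smul_set]
  exact (measureReal_biUnion_finset_le _ _).trans_eq (by simp [measureReal_smul_set])

variable [MeasurableConstSMul G X]

lemma measurableSet_finset_smul (S : Finset G) {B : Set X} (hB : MeasurableSet B) :
    MeasurableSet ((S : Set G) • B) := by
  rw [← iUnion_smul_set]
  exact Finset.measurableSet_biUnion _ fun s _ ↦ hB.const_smul s

variable [IsFiniteMeasure μ]

lemma IsTower.measureReal {S : Finset G} {B : Set X} (h : IsTower G X S B)
    (hB : MeasurableSet B) : μ.real ((S : Set G) • B) = S.card * μ.real B := by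
  rw [← iUnion_smul_set]
  exact (measureReal_biUnion_finset h fun s _ ↦ hB.const_smul s).trans
    (by simp [measureReal_smul_set])

lemma IsFineCastle.measureReal_iUnion_of_subset [MetricSpace X] {K : Finset G} {δ : ℝ} {ι : Type*}
    [Fintype ι] {S T : ι → Finset G} {B : ι → Set X} (h : IsFineCastle K δ S B)
    (hT : ∀ i, T i ⊆ S i) (hB : ∀ i, MeasurableSet (B i)) :
    μ.real (⋃ i, (T i : Set G) • B i) = ∑ i, (T i).card * μ.real (B i) := by
  have hdisj : Pairwise fun i j ↦ Disjoint ((T i : Set G) • B i) ((T j : Set G) • B j) :=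
    fun _ _ hij ↦ (h.disjoint hij).mono (smul_subset_smul_right (hT _))
      (smul_subset_smul_right (hT _))
  exact (measureReal_iUnion_fintype hdisj fun i ↦ measurableSet_finset_smul _ (hB i)).trans
    (Finset.sum_congr rfl fun i _ ↦ ((h.isTower i).mono (hT i) subset_rfl).measureReal (hB i))

lemma IsFineCastle.measureReal_iUnion [MetricSpace X] {K : Finset G} {δ : ℝ} {ι : Type*} [Fintype ι]
    {S : ι → Finset G} {B : ι → Set X} (h : IsFineCastle K δ S B)
    (hB : ∀ i, MeasurableSet (B i)) :
    μ.real (⋃ i, (S i : Set G) • B i) = ∑ i, (S i).card * μ.real (B i) :=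
  h.measureReal_iUnion_of_subset (fun _ ↦ subset_rfl) hB

end CastleMeasure

section Tileable

variable [Group G] [MulAction G X] [MetricSpace X] [MeasurableSpace X] {K : Finset G} {δ : ℝ}
  {A A' : Set X}

/-- `A` is the support of a finite fine castle with Borel bases. -/
def IsTileable (K : Finset G) (δ : ℝ) (A : Set X) : Prop :=
  ∃ (n : ℕ) (S : Fin n → Finset G) (B : Fin n → Set X),
    (∀ i, MeasurableSet (B i)) ∧ IsFineCastle K δ S B ∧ ⋃ i, (S i : Set G) • B i = A

lemma IsFineCastle.isTileable {ι : Type*} [Finite ι] {S : ι → Finset G} {B : ι → Set X}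
    (h : IsFineCastle K δ S B) (hB : ∀ i, MeasurableSet (B i)) :
    IsTileable K δ (⋃ i, (S i : Set G) • B i) := by
  obtain ⟨n, ⟨e⟩⟩ := Finite.exists_equiv_fin ι
  exact ⟨n, S ∘ e.symm, B ∘ e.symm, fun i ↦ hB _, h.comp e.symm.injective,
    e.symm.surjective.iUnion_comp fun i ↦ (S i : Set G) • B i⟩

lemma isTileable_empty (K : Finset G) (δ : ℝ) : IsTileable K δ (∅ : Set X) :=
  ⟨0, Fin.elim0, Fin.elim0, by simp, ⟨by simp, by simp, by simp, by simp [Pairwise]⟩, by simp⟩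

lemma IsTileable.union (h : IsTileable K δ A) (h' : IsTileable K δ A') (hdisj : Disjoint A A') :
    IsTileable K δ (A ∪ A') := by
  obtain ⟨m, S, B, hB, hS, rfl⟩ := h
  obtain ⟨n, T, D, hD, hT, rfl⟩ := h'
  have := (hS.sumElim hT hdisj).isTileable (Sum.rec hB hD)
  rwa [iUnion_sum] at this

lemma IsTileable.measurableSet [MeasurableConstSMul G X] (h : IsTileable K δ A) :
    MeasurableSet A := by
  obtain ⟨n, S, B, hB, -, rfl⟩ := h
  exact .iUnion fun i ↦ measurableSet_finset_smul _ (hB i)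

end Tileable

section MeasurableVisits

variable [Group G] [MulAction G X] [MeasurableSpace X] [MeasurableConstSMul G X] {F : Finset G}
  {A E : Set X}

lemma measurableSet_visits_eq (hA : MeasurableSet A) (F S : Finset G) :
    MeasurableSet {x | visits F A x = S} := by
  have hset : {x | visits F A x = S} = {_x | S ⊆ F} ∩ ⋂ s ∈ F, {x | s • x ∈ A ↔ s ∈ S} := by
    ext x
    simp only [mem_inter_iff, mem_iInter, mem_ofPred_eq, Finset.ext_iff, mem_visits]
    grind
  rw [hset]
  exact (MeasurableSet.const _).inter <| Finset.measurableSet_biInter _ fun s _ ↦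
    MeasurableSet.iff (measurable_const_smul s hA) (.const _)

variable {μ : Measure X} [IsFiniteMeasure μ]

lemma mul_measureReal_le_sum_of_le_card_visits (hA : MeasurableSet A) (hE : MeasurableSet E)
    {c : ℝ} (h : ∀ x ∈ E, c ≤ (visits F A x).card) :
    c * μ.real E ≤ ∑ s ∈ F, μ.real (E ∩ (s • ·) ⁻¹' A) := by
  classical
  have hpre (s : G) : MeasurableSet ((s • · : X → X) ⁻¹' A) := measurable_const_smul s hA
  have hint (s : G) : Integrable (((s • · : X → X) ⁻¹' A).indicator fun _ ↦ (1 : ℝ))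
      (μ.restrict E) := (integrable_const 1).indicator (hpre s)
  calc c * μ.real E = ∫ _ in E, c ∂μ := by simp [mul_comm]
    _ ≤ ∫ x in E, ∑ s ∈ F, ((s • · : X → X) ⁻¹' A).indicator (fun _ ↦ (1 : ℝ)) x ∂μ := by
        refine setIntegral_mono_on (integrable_const c) (integrable_finsetSum _ fun s _ ↦ hint s)
          hE fun x hx ↦ (h x hx).trans_eq ?_
        simp [visits, indicator_apply]
    _ = ∑ s ∈ F, μ.real (E ∩ (s • ·) ⁻¹' A) := by
        rw [integral_finsetSum _ fun s _ ↦ hint s]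
        simp [integral_indicator, hpre, inter_comm]

end MeasurableVisits

section TowerExtension

variable [Group G] [MulAction G X] {K F : Finset G} {δ ε : ℝ} {A Y : Set X}

lemma IsTower.eq_and_eq_of_smul_eq (h : IsTower G X F Y) {s t : G} (hs : s ∈ F) (ht : t ∈ F)
    {x y : X} (hx : x ∈ Y) (hy : y ∈ Y) (hxy : s • x = t • y) : s = t ∧ x = y := by
  have hst : s = t := by
    by_contra hne
    exact (h hs ht hne).ne_of_mem (smul_mem_smul_set hx) (smul_mem_smul_set hy) hxy
  exact ⟨hst, smul_left_cancel s (by rw [hxy, hst])⟩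

lemma le_card_visits_mono {B : Set X} (hAB : A ⊆ B) {c : ℝ} {x : X}
    (h : c ≤ (visits F A x).card) : c ≤ (visits F B x).card := by
  refine h.trans (Nat.cast_le.2 (Finset.card_le_card fun s hs ↦ ?_))
  rw [mem_visits] at hs ⊢
  exact ⟨hs.1, hAB hs.2⟩

lemma card_visits_add_card_visits_compl (F : Finset G) (A : Set X) (x : X) :
    (visits F A x).card + (visits F Aᶜ x).card = F.card := by
  classical
  simpa [visits] using F.card_filter_add_card_filter_not fun s ↦ s • x ∈ A

/-- The points of `Y` which at least `(1 - ε) |F|` elements of `F` send outside `A`. -/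
def freeBase (F : Finset G) (ε : ℝ) (Y A : Set X) : Set X :=
  {x ∈ Y | (1 - ε) * F.card ≤ (visits F Aᶜ x).card}

lemma freeBase_eq_iUnion : freeBase F ε Y A =
    ⋃ S : {S // S ⊆ F ∧ (1 - ε) * F.card ≤ S.card}, Y ∩ {x | visits F Aᶜ x = S} := by
  ext x
  simp only [freeBase, mem_iUnion, mem_inter_iff, mem_ofPred_eq]
  constructor
  · exact fun hx ↦ ⟨⟨_, fun s hs ↦ (mem_visits.1 hs).1, hx.2⟩, hx.1, rfl⟩
  · rintro ⟨S, hxY, hxS⟩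
    exact ⟨hxY, hxS ▸ S.2.2⟩

lemma union_finset_smul_freeBase : A ∪ (F : Set G) • freeBase F ε Y A =
    A ∪ ⋃ S : {S // S ⊆ F ∧ (1 - ε) * F.card ≤ S.card},
      (S.1 : Set G) • (Y ∩ {x | visits F Aᶜ x = S}) := by
  refine Subset.antisymm (union_subset subset_union_left ?_)
    (union_subset_union_right _ (iUnion_subset fun S ↦ ?_))
  · rw [freeBase_eq_iUnion]
    rintro _ ⟨s, hs, x, hx, rfl⟩
    obtain ⟨S, hxY, hxS : visits F Aᶜ x = S⟩ := mem_iUnion.1 hx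
    by_cases hsA : s • x ∈ A
    · exact .inl hsA
    · exact .inr (mem_iUnion.2 ⟨S, smul_mem_smul (hxS ▸ mem_visits.2 ⟨hs, hsA⟩) ⟨hxY, hxS⟩⟩)
  · rw [freeBase_eq_iUnion]
    exact smul_subset_smul (by exact_mod_cast S.2.1)
      (subset_iUnion (fun S : {S // S ⊆ F ∧ _} ↦ Y ∩ {x | visits F Aᶜ x = S}) S)

lemma disjoint_iUnion_smul_visits : Disjoint A
    (⋃ S : {S // S ⊆ F ∧ (1 - ε) * F.card ≤ S.card},
      (S.1 : Set G) • (Y ∩ {x | visits F Aᶜ x = S})) := by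
  refine disjoint_iUnion_right.2 fun S ↦ disjoint_right.2 ?_
  rintro _ ⟨s, hs, x, ⟨-, hxS : visits F Aᶜ x = S⟩, rfl⟩
  exact (mem_visits.1 (hxS ▸ hs)).2

lemma le_card_visits_union_smul_freeBase (hε : ε ≤ 1) {x : X} (hx : x ∈ Y) :
    ε * F.card ≤ (visits F (A ∪ (F : Set G) • freeBase F ε Y A) x).card := by
  by_cases hxB : x ∈ freeBase F ε Y A
  · have : visits F (A ∪ (F : Set G) • freeBase F ε Y A) x = F :=
      Finset.Subset.antisymm (fun s hs ↦ (mem_visits.1 hs).1) fun s hs ↦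
        mem_visits.2 ⟨hs, .inr (smul_mem_smul hs hxB)⟩
    rw [this]
    exact mul_le_of_le_one_left (by positivity) hε
  · refine le_card_visits_mono subset_union_left ?_
    have hlt : (visits F Aᶜ x).card < (1 - ε) * F.card := not_le.1 fun h ↦ hxB ⟨hx, h⟩
    have hsum : ((visits F A x).card : ℝ) + (visits F Aᶜ x).card = F.card := by
      exact_mod_cast card_visits_add_card_visits_compl F A x
    linarith

lemma measurableSet_freeBase [MeasurableSpace X] [MeasurableConstSMul G X]
    (hY : MeasurableSet Y) (hA : MeasurableSet A) :
    MeasurableSet (freeBase F ε Y A) := by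
  have : Finite {S // S ⊆ F ∧ (1 - ε) * (F.card : ℝ) ≤ S.card} :=
    (F.powerset.finite_toSet.subset fun S hS ↦ Finset.mem_powerset.2 hS.1).to_subtype
  rw [freeBase_eq_iUnion]
  exact .iUnion fun S ↦ hY.inter (measurableSet_visits_eq hA.compl _ _)

variable [MetricSpace X] [CompactSpace X]

lemma isFineCastle_visits (hF : ∀ S ⊆ F, (1 - ε) * F.card ≤ S.card → FolnerInv G K δ S)
    (hY : IsTower G X F Y) (hdiam : ∀ s ∈ F, Metric.diam (s • Y) < δ) (A : Set X) :
    IsFineCastle K δ (fun S : {S // S ⊆ F ∧ (1 - ε) * F.card ≤ S.card} ↦ S.1)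
      fun S ↦ Y ∩ {x | visits F Aᶜ x = S} where
  folnerInv S := hF S S.2.1 S.2.2
  isTower S := hY.mono S.2.1 inter_subset_left
  diam_lt S s hs := (Metric.diam_mono (smul_set_mono inter_subset_left)
    Metric.isBounded_of_compactSpace).trans_lt (hdiam s (S.2.1 hs))
  disjoint S T hST := by
    refine disjoint_left.2 ?_
    rintro _ ⟨s, hs, x, hx, rfl⟩ ⟨t, ht, y, hy, hxy⟩
    obtain ⟨-, rfl⟩ := hY.eq_and_eq_of_smul_eq (T.2.1 ht) (S.2.1 hs) hy.1 hx.1 hxy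
    exact hST (Subtype.ext (hx.2.symm.trans hy.2))

variable [MeasurableSpace X] [MeasurableConstSMul G X]
  {μ : Measure X} [SMulInvariantMeasure G X μ] [IsFiniteMeasure μ]

lemma IsTileable.union_smul_freeBase (hA : IsTileable K δ A) (hε : ε ≤ 1)
    (hF : ∀ S ⊆ F, (1 - ε) * F.card ≤ S.card → FolnerInv G K δ S) (hY : IsTower G X F Y)
    (hYm : MeasurableSet Y) (hdiam : ∀ s ∈ F, Metric.diam (s • Y) < δ) :
    IsTileable K δ (A ∪ (F : Set G) • freeBase F ε Y A) ∧
      μ.real A + (1 - ε) * F.card * μ.real (freeBase F ε Y A) ≤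
        μ.real (A ∪ (F : Set G) • freeBase F ε Y A) := by
  have : Finite {S // S ⊆ F ∧ (1 - ε) * (F.card : ℝ) ≤ S.card} :=
    (F.powerset.finite_toSet.subset fun S hS ↦ Finset.mem_powerset.2 hS.1).to_subtype
  have := Fintype.ofFinite {S // S ⊆ F ∧ (1 - ε) * (F.card : ℝ) ≤ S.card}
  have hcastle := isFineCastle_visits hF hY hdiam A
  have hmeas (S : {S // S ⊆ F ∧ (1 - ε) * (F.card : ℝ) ≤ S.card}) :
      MeasurableSet (Y ∩ {x | visits F Aᶜ x = S}) :=
    hYm.inter (measurableSet_visits_eq hA.measurableSet.compl _ _)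
  have htile := hcastle.isTileable hmeas
  rw [union_finset_smul_freeBase]
  refine ⟨hA.union htile disjoint_iUnion_smul_visits, ?_⟩
  rw [measureReal_union disjoint_iUnion_smul_visits htile.measurableSet,
    hcastle.measureReal_iUnion hmeas, freeBase_eq_iUnion]
  gcongr
  calc (1 - ε) * F.card * μ.real (⋃ S : {S // S ⊆ F ∧ _}, Y ∩ {x | visits F Aᶜ x = S})
      ≤ (1 - ε) * F.card * ∑ S : {S // S ⊆ F ∧ _}, μ.real (Y ∩ {x | visits F Aᶜ x = S}) :=
        mul_le_mul_of_nonneg_left (measureReal_iUnion_fintype_le _)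
          (mul_nonneg (sub_nonneg.2 hε) (by positivity))
    _ ≤ _ := by
        rw [Finset.mul_sum]
        gcongr with S
        exact S.2.2

lemma IsTileable.exists_union_smul {ι : Type*} (hA : IsTileable K δ A) (hε : ε ≤ 1)
    (hF : ∀ S ⊆ F, (1 - ε) * F.card ≤ S.card → FolnerInv G K δ S) {Y : ι → Set X}
    (hY : ∀ i, IsTower G X F (Y i)) (hYm : ∀ i, MeasurableSet (Y i))
    (hdiam : ∀ i, ∀ s ∈ F, Metric.diam (s • Y i) < δ) (J : Finset ι) :
    ∃ B : Set X, MeasurableSet B ∧ IsTileable K δ (A ∪ (F : Set G) • B) ∧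
      μ.real A + (1 - ε) * F.card * μ.real B ≤ μ.real (A ∪ (F : Set G) • B) ∧
      ∀ i ∈ J, ∀ x ∈ Y i, ε * F.card ≤ (visits F (A ∪ (F : Set G) • B) x).card := by
  classical
  induction J using Finset.induction_on with
  | empty => exact ⟨∅, .empty, by simpa using hA, by simp, by simp⟩
  | insert j J hj ih =>
    obtain ⟨B, hB, hAB, hμB, hJ⟩ := ih
    set A₁ := A ∪ (F : Set G) • B
    set B' := freeBase F ε (Y j) A₁
    obtain ⟨htile, hμ⟩ := hAB.union_smul_freeBase (μ := μ) hε hF (hY j) (hYm j) (hdiam j)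
    have hunion : A ∪ (F : Set G) • (B ∪ B') = A₁ ∪ (F : Set G) • B' := by
      rw [smul_union, union_assoc]
    refine ⟨B ∪ B', hB.union (measurableSet_freeBase (hYm j) hAB.measurableSet), ?_⟩
    rw [hunion]
    refine ⟨htile, ?_, fun i hi x hx ↦ ?_⟩
    · have hε' : 0 ≤ (1 - ε) * F.card := mul_nonneg (sub_nonneg.2 hε) (by positivity)
      have := mul_le_mul_of_nonneg_left (measureReal_union_le (μ := μ) B B') hε'
      linarith
    · rcases Finset.mem_insert.1 hi with rfl | hi
      · exact le_card_visits_union_smul_freeBase hε hx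
      · exact le_card_visits_mono subset_union_left (hJ i hi x hx)

end TowerExtension

section CompactCastles

variable [Group G] [MulAction G X]

lemma eventually_smul_subset [TopologicalSpace X] [ContinuousConstSMul G X] {C O : Set X} {g : G}
    (hO : IsOpen O) (h : g • C ⊆ O) : ∀ᶠ U in (𝓝ˢ C).smallSets, g • U ⊆ O := by
  refine eventually_smallSets.2 ⟨(g • ·) ⁻¹' O, ?_, fun U hU ↦ image_subset_iff.2 hU⟩
  exact (hO.preimage (continuous_const_smul g)).mem_nhdsSet.2 (image_subset_iff.1 h)

lemma eventually_finset_smul_subset [TopologicalSpace X] [ContinuousConstSMul G X] {C O : Set X}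
    {S : Finset G} (hO : IsOpen O) (h : (S : Set G) • C ⊆ O) :
    ∀ᶠ U in (𝓝ˢ C).smallSets, (S : Set G) • U ⊆ O := by
  simp only [← iUnion_smul_set, iUnion_subset_iff] at h ⊢
  exact (Finset.eventually_all S).2 fun s hs ↦ eventually_smul_subset hO (h s hs)

lemma IsTower.eventually_smallSets [TopologicalSpace X] [T2Space X] [ContinuousConstSMul G X]
    {S : Finset G} {C : Set X} (h : IsTower G X S C) (hC : IsCompact C) :
    ∀ᶠ U in (𝓝ˢ C).smallSets, IsTower G X S U := by
  have hdisj {s t : G} (hst : Disjoint (s • C) (t • C)) :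
      ∀ᶠ U in (𝓝ˢ C).smallSets, Disjoint (s • U) (t • U) := by
    obtain ⟨O, O', hO, hO', hsO, htO, hOO⟩ :=
      SeparatedNhds.of_isCompact_isCompact (hC.smul s) (hC.smul t) hst
    filter_upwards [eventually_smul_subset hO hsO, eventually_smul_subset hO' htO] with U hs ht
    exact hOO.mono hs ht
  refine (Finset.eventually_all S).2 fun s hs ↦ (Finset.eventually_all S).2 fun t ht ↦ ?_
  by_cases hst : s = t
  · exact .of_forall fun _ hne ↦ absurd hst hne
  · exact (hdisj (h hs ht hst)).mono fun _ hU _ ↦ hU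

lemma FreeAction.isTower_singleton (hfree : FreeAction G X) (S : Finset G) (x : X) :
    IsTower G X S {x} := by
  refine fun s _ t _ hst ↦ ?_
  simp only [smul_set_singleton, disjoint_singleton]
  exact fun h ↦ hst (inv_mul_eq_one.1 (hfree (t⁻¹ * s) x (by rw [mul_smul, h, inv_smul_smul]))).symm

variable [MetricSpace X] [CompactSpace X] [ContinuousConstSMul G X] {δ : ℝ}

lemma eventually_diam_smul_lt {C : Set X} {g : G} (h : Metric.diam (g • C) < δ) :
    ∀ᶠ U in (𝓝ˢ C).smallSets, Metric.diam (g • U) < δ := by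
  obtain ⟨r, hr, hrδ⟩ : ∃ r, 0 < r ∧ Metric.diam (g • C) + 2 * r < δ :=
    ⟨(δ - Metric.diam (g • C)) / 4, by linarith, by linarith⟩
  filter_upwards [eventually_smul_subset Metric.isOpen_thickening
    (Metric.self_subset_thickening hr (g • C))] with U hU
  exact ((Metric.diam_mono hU Metric.isBounded_of_compactSpace).trans
    (Metric.diam_thickening_le _ hr.le)).trans_lt hrδ

lemma exists_finite_open_cover_isTower (hfree : FreeAction G X) (F : Finset G) (hδ : 0 < δ) :
    ∃ (J : Finset X) (Y : X → Set X), (∀ x, IsOpen (Y x)) ∧ (∀ x, IsTower G X F (Y x)) ∧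
      (∀ x, ∀ s ∈ F, Metric.diam (s • Y x) < δ) ∧ ⋃ x ∈ J, Y x = univ := by
  have hY (x : X) : ∃ Y, IsOpen Y ∧ x ∈ Y ∧ IsTower G X F Y ∧
      ∀ s ∈ F, Metric.diam (s • Y) < δ := by
    have htower := (hfree.isTower_singleton F x).eventually_smallSets isCompact_singleton
    have hdiam : ∀ᶠ U in (𝓝ˢ {x}).smallSets, ∀ s ∈ F, Metric.diam (s • U) < δ :=
      (Finset.eventually_all F).2 fun s _ ↦ eventually_diam_smul_lt (by simpa using hδ)
    obtain ⟨U, hU, h⟩ := eventually_smallSets.1 (htower.and hdiam)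
    rw [nhdsSet_singleton] at hU
    exact ⟨interior U, isOpen_interior, mem_interior_iff_mem_nhds.2 hU,
      h _ interior_subset⟩
  choose Y hYo hxY hYF hYδ using hY
  obtain ⟨J, hJ⟩ := CompactSpace.elim_nhds_subcover Y fun x ↦ (hYo x).mem_nhds (hxY x)
  exact ⟨J, Y, hYo, hYF, hYδ, hJ⟩

variable {K : Finset G} {ι : Type*} [Finite ι] {S : ι → Finset G} {C : ι → Set X}

lemma IsFineCastle.eventually_cthickening (h : IsFineCastle K δ S C) (hC : ∀ i, IsCompact (C i)) :
    ∀ᶠ r in 𝓝[>] 0, IsFineCastle K δ S fun i ↦ Metric.cthickening r (C i) := by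
  let D (r : ℝ) (i : ι) : Set X := Metric.cthickening r (C i)
  have hlim (i : ι) : Tendsto (D · i) (𝓝[>] 0) (𝓝ˢ (C i)).smallSets := by
    refine tendsto_smallSets_iff.2 fun U hU ↦ ?_
    obtain ⟨r, hr, hrU⟩ := (Metric.hasBasis_nhdsSet_cthickening (hC i)).mem_iff.1 hU
    filter_upwards [Ioc_mem_nhdsGT hr] with t ht
    exact (Metric.cthickening_mono ht.2 _).trans hrU
  have hSC (i : ι) : IsCompact ((S i : Set G) • C i) := by
    rw [← iUnion_smul_set]
    exact (S i).isCompact_biUnion fun s _ ↦ (hC i).smul s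
  have htower := eventually_all.2 fun i ↦
    (hlim i).eventually ((h.isTower i).eventually_smallSets (hC i))
  have hdiam := eventually_all.2 fun i ↦ (Finset.eventually_all (S i)).2 fun s hs ↦
    (hlim i).eventually (eventually_diam_smul_lt (h.diam_lt i s hs))
  have hdisj : ∀ᶠ r in 𝓝[>] 0, ∀ i j, i ≠ j →
      Disjoint ((S i : Set G) • D r i) ((S j : Set G) • D r j) := by
    refine eventually_all.2 fun i ↦ eventually_all.2 fun j ↦ ?_
    by_cases hij : i = j
    · exact .of_forall fun _ hne ↦ absurd hij hne
    obtain ⟨O, O', hO, hO', hiO, hjO, hOO⟩ :=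
      SeparatedNhds.of_isCompact_isCompact (hSC i) (hSC j) (h.disjoint hij)
    filter_upwards [(hlim i).eventually (eventually_finset_smul_subset hO hiO),
      (hlim j).eventually (eventually_finset_smul_subset hO' hjO)] with r hi hj _
    exact hOO.mono hi hj
  filter_upwards [htower, hdiam, hdisj] with r hr hr' hr''
  exact ⟨h.folnerInv, hr, hr', hr''⟩

lemma IsFineCastle.exists_isOpenCastle (h : IsFineCastle K δ S C) (hC : ∀ i, IsCompact (C i)) :
    ∃ V : ι → Set X, IsOpenCastle K δ S V ∧ ∀ i, C i ⊆ V i := by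
  obtain ⟨r, hr, hr₀⟩ := ((h.eventually_cthickening hC).and self_mem_nhdsWithin).exists
  exact ⟨fun i ↦ Metric.thickening r (C i),
    ⟨hr.mono fun i ↦ Metric.closure_thickening_subset_cthickening _ _,
      fun i ↦ Metric.isOpen_thickening⟩, fun i ↦ Metric.self_subset_thickening hr₀ _⟩

variable [MeasurableSpace X] [BorelSpace X] {μ : Measure X} [SMulInvariantMeasure G X μ]
  [IsFiniteMeasure μ] {A : Set X}

lemma IsTileable.exists_isOpenCastle (h : IsTileable K δ A) {ε : ℝ} (hε : 0 < ε) :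
    ∃ (n : ℕ) (S : Fin n → Finset G) (V : Fin n → Set X), IsOpenCastle K δ S V ∧
      μ.real A ≤ μ.real (⋃ i, (S i : Set G) • V i) + ε := by
  obtain ⟨n, S, B, hB, hcastle, rfl⟩ := h
  obtain ⟨η, hη, hηε⟩ : ∃ η : ℝ, 0 < η ∧ (∑ i, ((S i).card : ℝ)) * η ≤ ε := by
    have : 0 ≤ ∑ i, ((S i).card : ℝ) := by positivity
    refine ⟨ε / (∑ i, ((S i).card : ℝ) + 1), by positivity, ?_⟩
    rw [mul_div_assoc', div_le_iff₀ (by positivity)]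
    nlinarith
  have hC (i : Fin n) : ∃ C ⊆ B i, IsCompact C ∧ μ.real (B i) ≤ μ.real C + η := by
    obtain ⟨C, hCB, hC, hμC⟩ := (hB i).exists_isCompact_sdiff_lt (measure_ne_top μ _)
      (ENNReal.ofReal_pos.2 hη).ne'
    refine ⟨C, hCB, hC, ?_⟩
    have := ENNReal.toReal_le_of_le_ofReal hη.le hμC.le
    have := measureReal_sdiff (μ := μ) hCB hC.measurableSet
    grind [Measure.real]
  choose C hCB hC hμC using hC
  have hcastle' := hcastle.mono hCB
  obtain ⟨V, hV, hCV⟩ := hcastle'.exists_isOpenCastle hC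
  refine ⟨n, S, V, hV, ?_⟩
  calc μ.real (⋃ i, (S i : Set G) • B i) = ∑ i, (S i).card * μ.real (B i) :=
        hcastle.measureReal_iUnion hB
    _ ≤ ∑ i, (S i).card * (μ.real (C i) + η) := by gcongr with i; exact hμC i
    _ = ∑ i, (S i).card * μ.real (C i) + (∑ i, ((S i).card : ℝ)) * η := by
        simp only [mul_add, Finset.sum_add_distrib, Finset.sum_mul]
    _ ≤ μ.real (⋃ i, (S i : Set G) • V i) + ε := by
        rw [← hcastle'.measureReal_iUnion fun i ↦ (hC i).measurableSet]
        exact add_le_add (measureReal_mono (iUnion_mono fun i ↦ smul_subset_smul_left (hCV i))) hηε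

end CompactCastles

section OrnsteinWeiss

variable [Group G] [MulAction G X] [MeasurableSpace X] {F : Finset G}
  {A A' B : Set X} {ε η : ℝ} {μ : Measure X} [SMulInvariantMeasure G X μ] [IsFiniteMeasure μ]

lemma measureReal_compl_inter_preimage_union_le [DecidableEq G] (g : G) :
    μ.real ((A ∪ (F : Set G) • B)ᶜ ∩ (g • ·) ⁻¹' (A ∪ (F : Set G) • B)) ≤
      μ.real (Aᶜ ∩ (g • ·) ⁻¹' A) + ((g⁻¹ • F) \ F).card * μ.real B := by
  have hsub : (A ∪ (F : Set G) • B)ᶜ ∩ (g • ·) ⁻¹' (A ∪ (F : Set G) • B) ⊆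
      (Aᶜ ∩ (g • ·) ⁻¹' A) ∪ (((g⁻¹ • F) \ F : Finset G) : Set G) • B := by
    rintro x ⟨hx, hgx | ⟨s, hs, b, hb, hsb⟩⟩
    · exact .inl ⟨fun hxA ↦ hx (.inl hxA), hgx⟩
    · have hxb : (g⁻¹ * s) • b = x := by rw [mul_smul, inv_smul_eq_iff]; exact hsb
      refine .inr ⟨g⁻¹ * s, ?_, b, hb, hxb⟩
      refine Finset.mem_sdiff.2 ⟨Finset.smul_mem_smul_finset hs, fun hF ↦ hx (.inr ?_)⟩
      exact hxb ▸ smul_mem_smul hF hb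
  refine ((measureReal_mono hsub).trans (measureReal_union_le _ _)).trans ?_
  exact add_le_add_right (measureReal_finset_smul_le _ _) _

lemma mul_measureReal_compl_le [MeasurableConstSMul G X] (hA : MeasurableSet A)
    (hA' : MeasurableSet A') (hF : F.Nonempty)
    (hvisits : ∀ x, ε * F.card ≤ (visits F A' x).card)
    (hη : ∀ s ∈ F, μ.real (Aᶜ ∩ (s • ·) ⁻¹' A) ≤ η) :
    ε * μ.real Aᶜ ≤ η + μ.real (A' \ A) := by
  have hcard : (0 : ℝ) < F.card := by exact_mod_cast hF.card_pos
  have hstep (s : G) (hs : s ∈ F) :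
      μ.real (Aᶜ ∩ (s • ·) ⁻¹' A') ≤ η + μ.real (A' \ A) := by
    calc μ.real (Aᶜ ∩ (s • ·) ⁻¹' A')
        ≤ μ.real ((Aᶜ ∩ (s • ·) ⁻¹' A) ∪ (s • ·) ⁻¹' (A' \ A)) :=
          measureReal_mono fun x hx ↦ by by_cases hsx : s • x ∈ A <;> simp_all
      _ ≤ μ.real (Aᶜ ∩ (s • ·) ⁻¹' A) + μ.real ((s • ·) ⁻¹' (A' \ A)) := measureReal_union_le _ _
      _ ≤ η + μ.real (A' \ A) := by
          refine add_le_add (hη s hs) (le_of_eq ?_)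
          rw [measureReal_def, measure_preimage_smul, measureReal_def]
  refine le_of_mul_le_mul_left ?_ hcard
  calc F.card * (ε * μ.real Aᶜ) = ε * F.card * μ.real Aᶜ := by ring
    _ ≤ ∑ s ∈ F, μ.real (Aᶜ ∩ (s • ·) ⁻¹' A') :=
        mul_measureReal_le_sum_of_le_card_visits hA' hA.compl fun x _ ↦ hvisits x
    _ ≤ F.card * (η + μ.real (A' \ A)) := by
        exact (Finset.sum_le_card_nsmul F _ _ hstep).trans_eq (nsmul_eq_mul _ _)

variable [MetricSpace X] {K : Finset G} {δ c : ℝ}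

/-- The complement of some tileable set has measure at most `c`, and this set can be taken almost
invariant under any given finite part of `G`. -/
def HasQuasiTilings (μ : Measure X) (K : Finset G) (δ c : ℝ) : Prop :=
  ∀ (F : Finset G) (η : ℝ), 0 < η → ∃ A : Set X, IsTileable K δ A ∧ μ.real Aᶜ ≤ c ∧
    ∀ s ∈ F, μ.real (Aᶜ ∩ (s • ·) ⁻¹' A) ≤ η

lemma hasQuasiTilings_one (μ : Measure X) [IsProbabilityMeasure μ] (K : Finset G) (δ : ℝ) :
    HasQuasiTilings μ K δ 1 :=
  fun _ _ hη ↦ ⟨∅, isTileable_empty K δ, by simp, by simp [hη.le]⟩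

end OrnsteinWeiss

section OrnsteinWeissCompact

variable [Group G] [MulAction G X] [MetricSpace X] [CompactSpace X] [ContinuousConstSMul G X]
  [MeasurableSpace X] [BorelSpace X] {K : Finset G} {δ c ε : ℝ} {μ : Measure X}
  [SMulInvariantMeasure G X μ] [IsProbabilityMeasure μ]

lemma HasQuasiTilings.one_sub_mul_add (h : HasQuasiTilings μ K δ c) (hG : AmenableGroup G)
    (hfree : FreeAction G X) (hδ : 0 < δ) (hε₀ : 0 < ε) (hε₁ : ε ≤ 1 / 2)
    (hε : (K.card + 1) * ε ≤ δ / 2) {γ : ℝ} (hγ : 0 < γ) :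
    HasQuasiTilings μ K δ ((1 - ε) * c + γ) := by
  classical
  intro F' η hη
  obtain ⟨F, hFne, hF⟩ := hG (K ∪ F'⁻¹) (min (δ / 2) (η / 4)) (by positivity)
  obtain ⟨A, hA, hAc, hAη⟩ := h (F ∪ F') (min γ (η / 2)) (by positivity)
  obtain ⟨J, Y, hYo, hYF, hYδ, hJ⟩ := exists_finite_open_cover_isTower hfree F hδ
  have hFK : FolnerInv G K (δ / 2) F := hF.mono Finset.subset_union_left (min_le_left _ _)
  obtain ⟨B, -, hA', hμB, hvisits⟩ := hA.exists_union_smul (μ := μ) (by linarith)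
    (fun S hS hcard ↦ hFK.of_subset hε hS hcard) hYF (fun x ↦ (hYo x).measurableSet) hYδ J
  set A' := A ∪ (F : Set G) • B
  have hAm := hA.measurableSet
  refine ⟨A', hA', ?_, fun s hs ↦ ?_⟩
  · have hgain : ε * μ.real Aᶜ ≤ γ + μ.real (A' \ A) := by
      refine mul_measureReal_compl_le hAm hA'.measurableSet hFne (fun x ↦ ?_) fun s hs ↦
        (hAη s (Finset.mem_union_left _ hs)).trans (min_le_left _ _)
      obtain ⟨i, hi, hxi⟩ := mem_iUnion₂.1 (hJ ▸ mem_univ x)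
      exact hvisits i hi x hxi
    rw [measureReal_sdiff subset_union_left hAm] at hgain
    rw [probReal_compl_eq_one_sub hA'.measurableSet]
    rw [probReal_compl_eq_one_sub hAm] at hgain hAc
    nlinarith
  · have hFB : F.card * μ.real B ≤ 2 := by
      have := measureReal_le_one (μ := μ) (s := A')
      have := measureReal_nonneg (μ := μ) (s := A)
      have : 0 ≤ F.card * μ.real B := by positivity
      nlinarith
    calc μ.real (A'ᶜ ∩ (s • ·) ⁻¹' A')
        ≤ μ.real (Aᶜ ∩ (s • ·) ⁻¹' A) + ((s⁻¹ • F) \ F).card * μ.real B :=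
          measureReal_compl_inter_preimage_union_le s
      _ ≤ η / 2 + η / 4 * F.card * μ.real B := by
          gcongr
          · exact (hAη s (Finset.mem_union_right _ hs)).trans (min_le_right _ _)
          · exact (hF.mono subset_rfl (min_le_right _ _)).card_smul_sdiff_le <|
              Finset.mem_union_right _ (Finset.inv_mem_inv hs)
      _ ≤ η := by nlinarith

lemma exists_isTileable_lt_measureReal (hG : AmenableGroup G) (hfree : FreeAction G X)
    (K : Finset G) (hδ : 0 < δ) (μ : Measure X) [SMulInvariantMeasure G X μ]
    [IsProbabilityMeasure μ] {θ : ℝ} (hθ : θ < 1) :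
    ∃ A : Set X, IsTileable K δ A ∧ θ < μ.real A := by
  obtain ⟨ε, hε₀, hε₁, hε⟩ : ∃ ε : ℝ, 0 < ε ∧ ε ≤ 1 / 2 ∧ (K.card + 1) * ε ≤ δ / 2 := by
    refine ⟨min (1 / 2) (δ / 2 / (K.card + 1)), by positivity, min_le_left _ _, ?_⟩
    rw [mul_comm, ← le_div_iff₀ (by positivity)]
    exact min_le_right _ _
  have hquasi (n : ℕ) : HasQuasiTilings μ K δ ((1 - ε / 2) ^ n) := by
    induction n with
    | zero => simpa using hasQuasiTilings_one μ K δ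
    | succ n ih =>
      have hpow : 0 < (1 - ε / 2) ^ n := pow_pos (by linarith) n
      convert ih.one_sub_mul_add hG hfree hδ hε₀ hε₁ hε
        (γ := ε / 2 * (1 - ε / 2) ^ n) (by positivity) using 1
      ring
  obtain ⟨n, hn⟩ := exists_pow_lt_of_lt_one (sub_pos.2 hθ) (show 1 - ε / 2 < 1 by linarith)
  obtain ⟨A, hA, hAc, -⟩ := hquasi n ∅ 1 one_pos
  rw [probReal_compl_eq_one_sub hA.measurableSet] at hAc
  exact ⟨A, hA, by linarith⟩

lemma exists_isOpenCastle_lt_measureReal (hG : AmenableGroup G) (hfree : FreeAction G X)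
    (K : Finset G) (hδ : 0 < δ) (μ : Measure X) [SMulInvariantMeasure G X μ]
    [IsProbabilityMeasure μ] {θ : ℝ} (hθ : θ < 1) :
    ∃ (n : ℕ) (S : Fin n → Finset G) (V : Fin n → Set X), IsOpenCastle K δ S V ∧
      θ < μ.real (⋃ i, (S i : Set G) • V i) := by
  obtain ⟨A, hA, hθA⟩ := exists_isTileable_lt_measureReal hG hfree K hδ μ hθ
  obtain ⟨n, S, V, hV, hAV⟩ := hA.exists_isOpenCastle (μ := μ) (half_pos (sub_pos.2 hθA))
  exact ⟨n, S, V, hV, by linarith⟩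

end OrnsteinWeissCompact

section FolnerFilter

variable [Group G]

/-- The filter of Følner sets: a property holds eventually along `folner G` if it holds for all
sufficiently invariant nonempty finite subsets of `G`. -/
def folner (G : Type*) [Group G] : Filter (Finset G) :=
  ⨅ (p : Finset G × ℝ) (_ : 0 < p.2), 𝓟 {F | F.Nonempty ∧ FolnerInv G p.1 p.2 F}

lemma hasBasis_folner : (folner G).HasBasis (fun p : Finset G × ℝ ↦ 0 < p.2)
    fun p ↦ {F | F.Nonempty ∧ FolnerInv G p.1 p.2 F} := by
  classical
  refine hasBasis_biInf_principal' (fun p hp q hq ↦ ?_) ⟨(∅, 1), one_pos⟩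
  exact ⟨(p.1 ∪ q.1, min p.2 q.2), lt_min hp hq,
    fun F hF ↦ ⟨hF.1, hF.2.mono Finset.subset_union_left (min_le_left _ _)⟩,
    fun F hF ↦ ⟨hF.1, hF.2.mono Finset.subset_union_right (min_le_right _ _)⟩⟩

lemma eventually_folner_nonempty : ∀ᶠ F in folner G, F.Nonempty :=
  hasBasis_folner.eventually_iff.2 ⟨(∅, 1), one_pos, fun _ hF ↦ hF.1⟩

lemma AmenableGroup.neBot_folner (hG : AmenableGroup G) : (folner G).NeBot :=
  hasBasis_folner.neBot_iff.2 fun {p} hp ↦ hG p.1 p.2 hp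

end FolnerFilter

section Ergodicity

variable [Group G] [MulAction G X] [MeasurableSpace X]

lemma exists_ae_eq_const_of_forall_comp_smul_ae_eq {μ : Measure X} [ErgodicSMul G X μ] {f : X → ℝ}
    (hf : Measurable f) (hinv : ∀ g : G, (fun x ↦ f (g • x)) =ᵐ[μ] f) :
    ∃ c : ℝ, f =ᵐ[μ] fun _ ↦ c := by
  refine exists_eventuallyEq_const_of_forall_separating MeasurableSet fun U hU ↦ ?_
  have : EventuallyConst (f ⁻¹' U) (ae μ) :=
    aeconst_of_forall_preimage_smul_ae_eq G (hf hU).nullMeasurableSet fun g ↦ (hinv g).preimage U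
  exact eventuallyConst_set.1 this

lemma ergodicSMul_of_mem_EG [Countable G] [MeasurableConstSMul G X] {μ : ProbabilityMeasure X}
    (hμ : μ ∈ EG G X) :
    ErgodicSMul G X (μ : Measure X) where
  measure_preimage_smul g s hs := by
    rw [← Measure.map_apply (measurable_const_smul g) hs, hμ.1 g]
  aeconst_of_forall_preimage_smul_ae_eq {s} hs hinv := by
    set A : Set X := ⋂ g : G, (g • ·) ⁻¹' s
    have hAs : A =ᵐ[(μ : Measure X)] s := by
      simpa only [iInter_const] using Filter.EventuallyEq.countable_iInter hinv
    have hmem (g : G) {x : X} (hx : x ∈ A) : g • x ∈ A :=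
      mem_iInter.2 fun k ↦ by simpa [mul_smul] using mem_iInter.1 hx (k * g)
    have hAinv (g : G) : g • A = A := by
      ext x
      rw [mem_smul_set_iff_inv_smul_mem]
      exact ⟨fun hx ↦ by simpa using hmem g hx, hmem _⟩
    have hAm : MeasurableSet A := .iInter fun g ↦ measurable_const_smul g hs
    refine (EventuallyEq.eventuallyConst_iff hAs).1 (eventuallyConst_set'.2 ?_)
    refine (hμ.2 A hAm hAinv).imp (fun h0 ↦ ?_) fun h1 ↦ ?_
    · exact ae_eq_empty.2 ((ProbabilityMeasure.null_iff_toMeasure_null μ A).1 h0)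
    · rw [ae_eq_univ, prob_compl_eq_zero_iff hAm,
        ← ProbabilityMeasure.ennreal_coeFn_eq_coeFn_toMeasure, h1, ENNReal.coe_one]

end Ergodicity

section MeanErgodic

lemma exists_mem_forall_norm_le_imp_eq {E : Type*} [NormedAddCommGroup E] [InnerProductSpace ℝ E]
    {W : Set E} (hne : W.Nonempty) (hcomplete : IsComplete W) (hconv : Convex ℝ W) :
    ∃ v ∈ W, ∀ w ∈ W, ‖w‖ ≤ ‖v‖ → w = v := by
  obtain ⟨v, hv, hmin⟩ := exists_norm_eq_iInf_of_complete_convex hne hcomplete hconv 0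
  rw [norm_eq_iInf_iff_real_inner_le_zero hconv hv] at hmin
  refine ⟨v, hv, fun w hw hle ↦ ?_⟩
  have hinner : ‖v‖ ^ 2 ≤ inner ℝ v w := by
    have := hmin w hw
    rw [zero_sub, inner_neg_left, inner_sub_right, real_inner_self_eq_norm_sq] at this
    linarith
  have hsq : ‖w - v‖ ^ 2 ≤ 0 := by
    rw [norm_sub_rev, norm_sub_sq_real]
    nlinarith [norm_nonneg w]
  exact sub_eq_zero.1 (norm_eq_zero.1 (sq_eq_zero_iff.1 (hsq.antisymm (sq_nonneg _))))

variable [Group G] [MulAction G X] [TopologicalSpace X]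
  [ContinuousConstSMul G X]

variable (G) in
/-- The convex hull of the orbit of a continuous function under translation by `G`. -/
def orbitHull (f : C(X, ℝ)) : Set C(X, ℝ) := convexHull ℝ (range fun g : G ↦ smulTranslate g f)

lemma smulTranslate_mem_orbitHull {f p : C(X, ℝ)} (hp : p ∈ orbitHull G f) (g : G) :
    smulTranslate g p ∈ orbitHull G f := by
  have himage : smulTranslate g '' orbitHull G f ⊆ orbitHull G f := by
    rw [orbitHull, LinearMap.image_convexHull]
    refine convexHull_mono ?_
    rintro _ ⟨_, ⟨k, rfl⟩, rfl⟩
    exact ⟨k * g, by ext x; simp [mul_smul]⟩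
  exact himage ⟨p, hp, rfl⟩

variable [CompactSpace X] [MeasurableSpace X] [BorelSpace X] {μ : Measure X}

open ProbabilityTheory

/-- The element of least norm in the closure of the hull is unique, hence invariant, hence constant
by ergodicity. -/
lemma exists_toLp_const_mem_closure_orbitHull [Countable G] [IsProbabilityMeasure μ]
    [ErgodicSMul G X μ] (f : C(X, ℝ)) :
    ∃ c : ℝ, ContinuousMap.toLp 2 μ ℝ (.const X c) ∈
      closure (ContinuousMap.toLp 2 μ ℝ '' orbitHull G f) := by
  set T : C(X, ℝ) →L[ℝ] Lp ℝ 2 μ := ContinuousMap.toLp 2 μ ℝ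
  have hmp (g : G) : MeasurePreserving (g • · : X → X) μ μ := measurePreserving_smul g μ
  obtain ⟨v, hv, hmin⟩ := exists_mem_forall_norm_le_imp_eq (W := closure (T '' orbitHull G f))
    ((convexHull_nonempty_iff.2 (range_nonempty _)).image T).closure isClosed_closure.isComplete
    ((convex_convexHull ℝ _).linear_image T.toLinearMap).closure
  have hfix (g : G) : Lp.compMeasurePreserving _ (hmp g) v = v := by
    refine hmin _ ?_ (Lp.norm_compMeasurePreserving v (hmp g)).le
    refine map_mem_closure (Lp.isometry_compMeasurePreserving (hmp g)).continuous hv ?_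
    rintro _ ⟨q, hq, rfl⟩
    exact ⟨smulTranslate g q, smulTranslate_mem_orbitHull hq g, rfl⟩
  obtain ⟨w, hw, hvw⟩ := Lp.aestronglyMeasurable v
  have hinv (g : G) : (fun x ↦ w (g • x)) =ᵐ[μ] w := by
    have hcomp := Lp.coeFn_compMeasurePreserving v (hmp g)
    rw [hfix g] at hcomp
    exact ((hmp g).quasiMeasurePreserving.ae_eq_comp hvw).symm.trans (hcomp.symm.trans hvw)
  obtain ⟨c, hc⟩ := exists_ae_eq_const_of_forall_comp_smul_ae_eq hw.measurable hinv
  refine ⟨c, ?_⟩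
  have : T (.const X c) = v :=
    Lp.ext ((ContinuousMap.coeFn_toLp μ _).trans (hvw.trans hc).symm)
  rwa [this]

lemma exists_mem_orbitHull_variance_lt [Countable G] [IsProbabilityMeasure μ] [ErgodicSMul G X μ]
    (f : C(X, ℝ)) {ε : ℝ} (hε : 0 < ε) : ∃ p ∈ orbitHull G f, Var[p; μ] < ε := by
  obtain ⟨c, hc⟩ := exists_toLp_const_mem_closure_orbitHull (G := G) (μ := μ) f
  obtain ⟨_, ⟨p, hp, rfl⟩, hdist⟩ := Metric.mem_closure_iff.1 hc √ε (Real.sqrt_pos.2 hε)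
  refine ⟨p, hp, ?_⟩
  have hsq : ‖ContinuousMap.toLp 2 μ ℝ (p - .const X c)‖ ^ 2 < ε := by
    rw [map_sub, ← dist_eq_norm, dist_comm, ← Real.lt_sqrt dist_nonneg]
    exact hdist
  have hvar : Var[p; μ] = Var[⇑(p - .const X c); μ] :=
    (variance_sub_const p.continuous.aestronglyMeasurable c).symm
  have hle : Var[⇑(p - .const X c); μ] ≤ ∫ x, ((p - .const X c : C(X, ℝ)) x) ^ 2 ∂μ :=
    variance_le_expectation_sq (p - .const X c : C(X, ℝ)).continuous.aestronglyMeasurable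
  rw [← real_inner_self_eq_norm_sq, ContinuousMap.inner_toLp] at hsq
  exact hvar.trans_lt (hle.trans_lt (by simpa [sq] using hsq))

end MeanErgodic

section Variance

open ProbabilityTheory

lemma variance_add_le {Ω : Type*} [MeasurableSpace Ω] {μ : Measure Ω} [IsFiniteMeasure μ]
    {Y Z : Ω → ℝ} (hY : MemLp Y 2 μ) (hZ : MemLp Z 2 μ) :
    Var[Y + Z; μ] ≤ 2 * Var[Y; μ] + 2 * Var[Z; μ] := by
  have := variance_nonneg (Y - Z) μ
  rw [variance_sub hY hZ] at this
  rw [variance_add hY hZ]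
  linarith

lemma variance_convexComb_le {Ω : Type*} [MeasurableSpace Ω] {μ : Measure Ω} [IsFiniteMeasure μ]
    {Y Z : Ω → ℝ} (hY : MemLp Y 2 μ) (hZ : MemLp Z 2 μ) {a b : ℝ} (ha : 0 ≤ a) (hb : 0 ≤ b)
    (hab : a + b = 1) : Var[a • Y + b • Z; μ] ≤ a * Var[Y; μ] + b * Var[Z; μ] := by
  have hsub := variance_nonneg (Y - Z) μ
  rw [variance_sub hY hZ] at hsub
  rw [variance_add (hY.const_smul a) (hZ.const_smul b), variance_smul, variance_smul,
    covariance_smul_left, covariance_smul_right]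
  obtain rfl : b = 1 - a := by linarith
  nlinarith [mul_nonneg (mul_nonneg ha hb) hsub]

variable [TopologicalSpace X] [CompactSpace X] [MeasurableSpace X] [BorelSpace X]

lemma variance_le_norm_sq (μ : Measure X) [IsProbabilityMeasure μ] (f : C(X, ℝ)) :
    Var[f; μ] ≤ ‖f‖ ^ 2 := by
  have := variance_le_sq_of_bounded (μ := μ) (a := -‖f‖) (b := ‖f‖) (X := f)
    (.of_forall fun x ↦ abs_le.1 (f.norm_coe_le_norm x)) f.continuous.aemeasurable
  linarith

lemma continuous_variance [HasOuterApproxClosed X] (f : C(X, ℝ)) :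
    Continuous fun ν : ProbabilityMeasure X ↦ Var[f; (ν : Measure X)] := by
  have hvar (ν : ProbabilityMeasure X) : Var[f; (ν : Measure X)] =
      ∫ x, (f ^ 2) x ∂(ν : Measure X) - (∫ x, f x ∂(ν : Measure X)) ^ 2 :=
    variance_eq_sub (f.memLp _ ℝ)
  simp only [hvar]
  exact (ProbabilityMeasure.continuous_integral_continuousMap _).sub
    ((ProbabilityMeasure.continuous_integral_continuousMap _).pow 2)

end Variance

section UniformErgodic

open ProbabilityTheory

variable [Group G] [MulAction G X] [TopologicalSpace X] [ContinuousConstSMul G X]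

/-- The average of the translates of a continuous function by a finite subset of `G`. -/
noncomputable def smulAverage (F : Finset G) : C(X, ℝ) →ₗ[ℝ] C(X, ℝ) :=
  (F.card : ℝ)⁻¹ • ∑ s ∈ F, smulTranslate s

lemma smulAverage_apply (F : Finset G) (f : C(X, ℝ)) (x : X) :
    smulAverage F f x = (F.card : ℝ)⁻¹ * ∑ s ∈ F, f (s • x) := by
  simp [smulAverage]

lemma smulAverage_mem_orbitHull {F : Finset G} (hF : F.Nonempty) (f : C(X, ℝ)) :
    smulAverage F f ∈ orbitHull G f := by
  have hcard : (F.card : ℝ) ≠ 0 := by exact_mod_cast hF.card_pos.ne'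
  have : smulAverage F f = ∑ s ∈ F, (F.card : ℝ)⁻¹ • smulTranslate s f := by
    simp [smulAverage, Finset.smul_sum]
  rw [this]
  refine (convex_convexHull ℝ _).sum_mem (fun _ _ ↦ by positivity) ?_
    fun s _ ↦ subset_convexHull ℝ _ ⟨s, rfl⟩
  simp [hcard]

variable [CompactSpace X]

lemma norm_smulAverage_smulTranslate_sub_le {K F : Finset G} {δ : ℝ} (hF : F.Nonempty)
    (h : FolnerInv G K δ F) {g : G} (hg : g ∈ K) (hδ : 0 ≤ δ) (f : C(X, ℝ)) :
    ‖smulAverage F (smulTranslate g f - f)‖ ≤ 2 * δ * ‖f‖ := by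
  have hcard : (0 : ℝ) < F.card := by exact_mod_cast hF.card_pos
  refine (ContinuousMap.norm_le _ (by positivity)).2 fun x ↦ ?_
  have hsum := h.abs_sum_sub_sum_le hg (f := fun s ↦ f (s • x)) fun s ↦ f.norm_coe_le_norm _
  simp only [smulAverage_apply, ContinuousMap.sub_apply, smulTranslate_apply,
    Finset.sum_sub_distrib, ← mul_smul, Real.norm_eq_abs, abs_mul, abs_inv, Nat.abs_cast]
  rw [inv_mul_le_iff₀ hcard]
  linarith

lemma tendsto_smulAverage_smulTranslate_sub (g : G) (f : C(X, ℝ)) :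
    Tendsto (fun F ↦ smulAverage F (smulTranslate g f - f)) (folner G) (𝓝 0) := by
  refine (hasBasis_folner.tendsto_iff Metric.nhds_basis_closedBall).2 fun ε hε ↦ ?_
  refine ⟨({g}, ε / (2 * (‖f‖ + 1))), by positivity, fun F ⟨hF, hinv⟩ ↦ ?_⟩
  rw [mem_closedBall_zero_iff]
  calc ‖smulAverage F (smulTranslate g f - f)‖ ≤ 2 * (ε / (2 * (‖f‖ + 1))) * ‖f‖ :=
        norm_smulAverage_smulTranslate_sub_le hF hinv (Finset.mem_singleton_self g)
          (by positivity) f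
    _ = ε * (‖f‖ / (‖f‖ + 1)) := by field_simp
    _ ≤ ε := mul_le_of_le_one_right hε.le ((div_le_one (by positivity)).2 (by linarith))

lemma tendsto_smulAverage_sub {f p : C(X, ℝ)} (hp : p ∈ orbitHull G f) :
    Tendsto (fun F ↦ smulAverage F (p - f)) (folner G) (𝓝 0) := by
  refine convexHull_min (t := {q : C(X, ℝ) | Tendsto (fun F ↦ smulAverage F (q - f)) (folner G)
    (𝓝 0)}) ?_ ?_ hp
  · rintro _ ⟨g, rfl⟩
    exact tendsto_smulAverage_smulTranslate_sub g f
  · intro q hq r hr a b _ _ hab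
    have hcomb : a • q + b • r - f = a • (q - f) + b • (r - f) := by
      rw [smul_sub, smul_sub, sub_add_sub_comm, ← add_smul, hab, one_smul]
    rw [mem_ofPred_eq, hcomb]
    simpa only [map_add, map_smul, smul_zero, add_zero] using
      (hq.const_smul a).add (hr.const_smul b)

variable [MeasurableSpace X] [BorelSpace X]

lemma integral_eq_of_mem_orbitHull {ν : ProbabilityMeasure X} (hν : ν ∈ MG G X) {f p : C(X, ℝ)}
    (hp : p ∈ orbitHull G f) : ∫ x, p x ∂(ν : Measure X) = ∫ x, f x ∂(ν : Measure X) := by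
  refine convexHull_min (t := {q : C(X, ℝ) | ∫ x, q x ∂(ν : Measure X) =
    ∫ x, f x ∂(ν : Measure X)}) ?_ ?_ hp
  · rintro _ ⟨g, rfl⟩
    exact integral_smulTranslate hν g f
  · intro q hq r hr a b _ _ hab
    have hint (h : C(X, ℝ)) : Integrable h (ν : Measure X) :=
      memLp_one_iff_integrable.1 (h.memLp _ ℝ)
    simp only [mem_ofPred_eq] at hq hr
    simp [integral_add ((hint _).const_mul _) ((hint _).const_mul _), integral_const_mul, hq, hr,
      ← add_mul, hab]

lemma variance_le_of_mem_orbitHull {μ : Measure X} [SMulInvariantMeasure G X μ]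
    [IsFiniteMeasure μ] {p q : C(X, ℝ)} (hq : q ∈ orbitHull G p) : Var[q; μ] ≤ Var[p; μ] := by
  refine convexHull_min (t := {q : C(X, ℝ) | Var[q; μ] ≤ Var[p; μ]}) ?_ ?_ hq
  · rintro _ ⟨g, rfl⟩
    exact ((measurePreserving_smul g μ).variance_fun_comp p.continuous.aemeasurable).le
  · intro q hq r hr a b ha hb hab
    calc Var[a • q + b • r; μ] ≤ a * Var[q; μ] + b * Var[r; μ] :=
          variance_convexComb_le (q.memLp _ ℝ) (r.memLp _ ℝ) ha hb hab
      _ ≤ a * Var[p; μ] + b * Var[p; μ] := by gcongr <;> assumption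
      _ = Var[p; μ] := by rw [← add_mul, hab, one_mul]

theorem eventually_variance_smulAverage_lt [Countable G] [HasOuterApproxClosed X]
    (hcpt : IsCompact (EG G X)) (f : C(X, ℝ)) {ε : ℝ} (hε : 0 < ε) :
    ∀ᶠ F in folner G, ∀ ν ∈ EG G X, Var[smulAverage F f; (ν : Measure X)] < ε := by
  suffices h : {q : Finset G × ProbabilityMeasure X | q.2 ∈ EG G X →
      Var[smulAverage q.1 f; (q.2 : Measure X)] < ε} ∈ folner G ×ˢ 𝓝ˢ (EG G X) from
    (Eventually.curry h).mono fun F hF ν hν ↦ hF.self_of_nhdsSet ν hν hν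
  refine hcpt.mem_prod_nhdsSet_of_forall fun μ hμ ↦ ?_
  have := ergodicSMul_of_mem_EG hμ
  obtain ⟨p, hp, hvar⟩ := exists_mem_orbitHull_variance_lt (G := G) (μ := (μ : Measure X)) f
    (show 0 < ε / 4 by positivity)
  have hF : ∀ᶠ F in folner G, F.Nonempty ∧ ‖smulAverage F (p - f)‖ ^ 2 < ε / 4 :=
    eventually_folner_nonempty.and <|
      ((tendsto_smulAverage_sub hp).norm.pow 2).eventually_lt_const (by simpa using hε)
  have hν : ∀ᶠ ν : ProbabilityMeasure X in 𝓝 μ, Var[p; (ν : Measure X)] < ε / 4 :=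
    (continuous_variance p).continuousAt.eventually_lt_const hvar
  filter_upwards [hF.prod_mk hν] with ⟨F, ν⟩ ⟨⟨hFne, hnorm⟩, hvarν⟩ hνE
  have := smulInvariantMeasure_of_mem_MG hνE.1
  have hsplit : ⇑(smulAverage F f) = smulAverage F p + smulAverage F (f - p) := by
    rw [map_sub, ← ContinuousMap.coe_add, add_sub_cancel]
  calc Var[smulAverage F f; (ν : Measure X)]
      ≤ 2 * Var[smulAverage F p; (ν : Measure X)] + 2 * ‖smulAverage F (f - p)‖ ^ 2 := by
        rw [hsplit]
        exact (variance_add_le (ContinuousMap.memLp _ ℝ _) (ContinuousMap.memLp _ ℝ _)).trans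
          (by gcongr; exact variance_le_norm_sq _ _)
    _ ≤ 2 * Var[p; (ν : Measure X)] + 2 * ‖smulAverage F (p - f)‖ ^ 2 := by
        rw [← neg_sub p f, map_neg, norm_neg]
        gcongr
        exact variance_le_of_mem_orbitHull (smulAverage_mem_orbitHull hFne p)
    _ < ε := by linarith

end UniformErgodic

section Separation

open ProbabilityTheory

lemma measureReal_setOf_le_abs_sub_integral_le {Ω : Type*} [MeasurableSpace Ω] {μ : Measure Ω}
    [IsFiniteMeasure μ] {Y : Ω → ℝ} (hY : MemLp Y 2 μ) {c : ℝ} (hc : 0 < c) :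
    μ.real {ω | c ≤ |Y ω - μ[Y]|} ≤ Var[Y; μ] / c ^ 2 :=
  ENNReal.toReal_le_of_le_ofReal (div_nonneg (variance_nonneg _ _) (sq_nonneg c))
    (meas_ge_le_variance_div_sq hY hc)

variable [TopologicalSpace X] [MeasurableSpace X]

/-- Two sets of probability measures are almost separated if, up to an arbitrarily small error which
is uniform on each of them, they are carried by open sets with disjoint closures. -/
def AlmostSeparated (A B : Set (ProbabilityMeasure X)) : Prop :=
  ∀ ε : ℝ, 0 < ε → ∃ U W : Set X, IsOpen U ∧ IsOpen W ∧ Disjoint (closure U) (closure W) ∧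
    (∀ ν ∈ A, (ν : Measure X).real Uᶜ ≤ ε) ∧ ∀ ν ∈ B, (ν : Measure X).real Wᶜ ≤ ε

variable {A A' B B' : Set (ProbabilityMeasure X)}

lemma AlmostSeparated.symm (h : AlmostSeparated A B) : AlmostSeparated B A := fun ε hε ↦
  let ⟨U, W, hU, hW, hdisj, hA, hB⟩ := h ε hε
  ⟨W, U, hW, hU, hdisj.symm, hB, hA⟩

lemma AlmostSeparated.mono (h : AlmostSeparated A B) (hA : A' ⊆ A) (hB : B' ⊆ B) :
    AlmostSeparated A' B' := fun ε hε ↦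
  let ⟨U, W, hU, hW, hdisj, hAU, hBW⟩ := h ε hε
  ⟨U, W, hU, hW, hdisj, fun ν hν ↦ hAU ν (hA hν), fun ν hν ↦ hBW ν (hB hν)⟩

lemma almostSeparated_empty_left (B : Set (ProbabilityMeasure X)) : AlmostSeparated ∅ B :=
  fun ε hε ↦ ⟨∅, univ, isOpen_empty, isOpen_univ, by simp, by simp, by simp [hε.le]⟩

lemma AlmostSeparated.union_left (h : AlmostSeparated A B) (h' : AlmostSeparated A' B) :
    AlmostSeparated (A ∪ A') B := by
  intro ε hε
  obtain ⟨U, W, hU, hW, hdisj, hAU, hBW⟩ := h (ε / 2) (half_pos hε)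
  obtain ⟨U', W', hU', hW', hdisj', hAU', hBW'⟩ := h' (ε / 2) (half_pos hε)
  refine ⟨U ∪ U', W ∩ W', hU.union hU', hW.inter hW', ?_, ?_, fun ν hν ↦ ?_⟩
  · rw [closure_union, disjoint_union_left]
    exact ⟨hdisj.mono_right (closure_mono inter_subset_left),
      hdisj'.mono_right (closure_mono inter_subset_right)⟩
  · have hle (ν : ProbabilityMeasure X) {V : Set X} (hV : V ⊆ U ∪ U')
        (h : (ν : Measure X).real Vᶜ ≤ ε / 2) : (ν : Measure X).real (U ∪ U')ᶜ ≤ ε :=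
      (measureReal_mono (compl_subset_compl.2 hV)).trans (h.trans (half_le_self hε.le))
    rintro ν (hν | hν)
    · exact hle ν subset_union_left (hAU ν hν)
    · exact hle ν subset_union_right (hAU' ν hν)
  · rw [compl_inter]
    linarith [measureReal_union_le (μ := (ν : Measure X)) Wᶜ W'ᶜ, hBW ν hν, hBW' ν hν]

lemma almostSeparated_of_isCompact [OpensMeasurableSpace X] (hA : IsCompact A) (hB : IsCompact B)
    (h : ∀ μ ∈ A, ∀ ν ∈ B, ∃ A' ∈ 𝓝[A] μ, ∃ B' ∈ 𝓝[B] ν, AlmostSeparated A' B') :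
    AlmostSeparated A B := by
  refine hA.induction_on (almostSeparated_empty_left B) (fun s t hst h ↦ h.mono hst subset_rfl)
    (fun s t ↦ .union_left) fun μ hμ ↦ ?_
  refine hB.induction_on (p := fun t ↦ ∃ A' ∈ 𝓝[A] μ, AlmostSeparated A' t)
    ⟨univ, univ_mem, (almostSeparated_empty_left _).symm⟩ ?_ ?_ fun ν hν ↦ ?_
  · rintro s t hst ⟨A', hA', h⟩
    exact ⟨A', hA', h.mono subset_rfl hst⟩
  · rintro s t ⟨A₁, hA₁, h₁⟩ ⟨A₂, hA₂, h₂⟩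
    exact ⟨A₁ ∩ A₂, inter_mem hA₁ hA₂, .symm <| .union_left
      (h₁.mono inter_subset_left subset_rfl).symm (h₂.mono inter_subset_right subset_rfl).symm⟩
  · obtain ⟨A', hA', B', hB', h⟩ := h μ hμ ν hν
    exact ⟨B', hB', A', hA', h⟩

variable [BorelSpace X] [HasOuterApproxClosed X]

lemma exists_integral_continuousMap_lt {μ ν : ProbabilityMeasure X} (h : μ ≠ ν) :
    ∃ f : C(X, ℝ), ∫ x, f x ∂(μ : Measure X) < ∫ x, f x ∂(ν : Measure X) := by
  by_contra! hle
  have : IsFiniteMeasure (μ : Measure X) := inferInstance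
  have : IsFiniteMeasure (ν : Measure X) := inferInstance
  refine h (Subtype.ext (ext_of_forall_integral_eq_of_IsFiniteMeasure (μ := (μ : Measure X))
    (ν := (ν : Measure X)) fun f ↦ ?_))
  have hneg := hle (-f.toContinuousMap)
  simp only [ContinuousMap.neg_apply, integral_neg, neg_le_neg_iff] at hneg
  exact hneg.antisymm (hle f.toContinuousMap)

variable [Group G] [Countable G] [MulAction G X] [ContinuousConstSMul G X] [CompactSpace X]

lemma almostSeparated_setOf_integral (hG : AmenableGroup G) (hcpt : IsCompact (EG G X))
    (f : C(X, ℝ)) {a b : ℝ} (hab : a < b) :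
    AlmostSeparated {ν ∈ EG G X | ∫ x, f x ∂(ν : Measure X) ≤ a}
      {ν ∈ EG G X | b ≤ ∫ x, f x ∂(ν : Measure X)} := by
  intro ε hε
  have := hG.neBot_folner
  set d := (b - a) / 3 with hd
  have hd0 : 0 < d := by rw [hd]; linarith
  obtain ⟨F, hvar, hF⟩ := ((eventually_variance_smulAverage_lt hcpt f
    (show 0 < ε * d ^ 2 by positivity)).and eventually_folner_nonempty).exists
  set u := smulAverage F f
  have hcheb {ν : ProbabilityMeasure X} (hν : ν ∈ EG G X) :
      (ν : Measure X).real {x | d ≤ |u x - ∫ y, f y ∂(ν : Measure X)|} ≤ ε := by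
    rw [← integral_eq_of_mem_orbitHull hν.1 (smulAverage_mem_orbitHull hF f)]
    refine (measureReal_setOf_le_abs_sub_integral_le (u.memLp _ ℝ) hd0).trans ?_
    exact (div_le_iff₀ (by positivity)).2 (hvar ν hν).le
  refine ⟨{x | u x < a + d}, {x | b - d < u x}, isOpen_lt u.continuous continuous_const,
    isOpen_lt continuous_const u.continuous, ?_, fun ν hν ↦ ?_, fun ν hν ↦ ?_⟩
  · refine .mono (closure_lt_subset_le u.continuous continuous_const)
      (closure_lt_subset_le continuous_const u.continuous) (Set.disjoint_left.2 fun x hx hx' ↦ ?_)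
    simp only [mem_ofPred_eq] at hx hx'
    linarith
  · refine (measureReal_mono fun x hx ↦ ?_).trans (hcheb hν.1)
    simp only [mem_compl_iff, mem_ofPred_eq, not_lt] at hx ⊢
    exact le_abs.2 (.inl (by linarith [hν.2]))
  · refine (measureReal_mono fun x hx ↦ ?_).trans (hcheb hν.1)
    simp only [mem_compl_iff, mem_ofPred_eq, not_lt] at hx ⊢
    exact le_abs.2 (.inr (by linarith [hν.2]))

theorem almostSeparated_of_subset_EG (hG : AmenableGroup G) (hcpt : IsCompact (EG G X))
    (hA : IsCompact A) (hB : IsCompact B) (hAE : A ⊆ EG G X) (hBE : B ⊆ EG G X)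
    (hdisj : Disjoint A B) : AlmostSeparated A B := by
  refine almostSeparated_of_isCompact hA hB fun μ hμ ν hν ↦ ?_
  obtain ⟨f, hf⟩ := exists_integral_continuousMap_lt (hdisj.ne_of_mem hμ hν)
  obtain ⟨a, ha, haν⟩ := exists_between hf
  obtain ⟨b, hab, hb⟩ := exists_between haν
  have hcont := (ProbabilityMeasure.continuous_integral_continuousMap (X := X) f)
  refine ⟨_, ?_, _, ?_, almostSeparated_setOf_integral hG hcpt f hab⟩
  · filter_upwards [mem_nhdsWithin_of_mem_nhds (hcont.continuousAt.eventually_lt_const ha),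
      self_mem_nhdsWithin] with μ' hμ' hμ'A using ⟨hAE hμ'A, hμ'.le⟩
  · filter_upwards [mem_nhdsWithin_of_mem_nhds (hcont.continuousAt.eventually_const_lt hb),
      self_mem_nhdsWithin] with ν' hν' hν'B using ⟨hBE hν'B, hν'.le⟩

end Separation

section HasOpenCastle

variable [Group G] [MulAction G X] [MetricSpace X] [MeasurableSpace X] {K : Finset G}
  {δ c c' : ℝ} {ι : Type*} {S : ι → Finset G} {V : ι → Set X} {A B : Set (ProbabilityMeasure X)}

/-- A single fine open castle has measure more than `c` with respect to each measure in `A`. -/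
def HasOpenCastle (K : Finset G) (δ c : ℝ) (A : Set (ProbabilityMeasure X)) : Prop :=
  ∃ (n : ℕ) (S : Fin n → Finset G) (V : Fin n → Set X), IsOpenCastle K δ S V ∧
    ∀ μ ∈ A, c < (μ : Measure X).real (⋃ i, (S i : Set G) • V i)

lemma IsOpenCastle.hasOpenCastle [Finite ι] (h : IsOpenCastle K δ S V)
    (hc : ∀ μ ∈ A, c < (μ : Measure X).real (⋃ i, (S i : Set G) • V i)) :
    HasOpenCastle K δ c A := by
  obtain ⟨n, ⟨e⟩⟩ := Finite.exists_equiv_fin ι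
  refine ⟨n, S ∘ e.symm, V ∘ e.symm, ⟨h.comp e.symm.injective, fun i ↦ h.isOpen _⟩, fun μ hμ ↦ ?_⟩
  exact (hc μ hμ).trans_eq <| congrArg _ <|
    (e.symm.surjective.iUnion_comp fun i ↦ (S i : Set G) • V i).symm

lemma HasOpenCastle.mono (h : HasOpenCastle K δ c A) (hc : c' ≤ c) (hB : B ⊆ A) :
    HasOpenCastle K δ c' B :=
  let ⟨n, S, V, hV, hA⟩ := h
  ⟨n, S, V, hV, fun μ hμ ↦ hc.trans_lt (hA μ (hB hμ))⟩

lemma hasOpenCastle_empty : HasOpenCastle K δ c (∅ : Set (ProbabilityMeasure X)) :=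
  ⟨0, Fin.elim0, Fin.elim0, ⟨⟨by simp, by simp, by simp, by simp [Pairwise]⟩, by simp⟩, by simp⟩

end HasOpenCastle

section Gluing

variable [Group G] [MulAction G X]

/-- The points of `V` whose `S`-orbit stays in `W`: shrinking the base `V` to this set confines a
tower of shape `S` to `W`. -/
def confinedBase (S : Finset G) (V W : Set X) : Set X :=
  V ∩ ⋂ s ∈ S, (s • ·) ⁻¹' W

lemma iUnion_smul_subset_confinedBase_union {ι : Type*} (S : ι → Finset G) (V : ι → Set X)
    (W : Set X) : ⋃ i, (S i : Set G) • V i ⊆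
      (⋃ i, (S i : Set G) • confinedBase (S i) (V i) W) ∪
        ⋃ i, ⋃ p ∈ S i ×ˢ S i, (p.1 * p.2⁻¹) • Wᶜ := by
  refine iUnion_subset fun i ↦ smul_subset_iff.2 fun s hs v hv ↦ ?_
  by_cases hvW : v ∈ confinedBase (S i) (V i) W
  · exact .inl (mem_iUnion_of_mem i (smul_mem_smul hs hvW))
  obtain ⟨t, ht, htW⟩ : ∃ t ∈ S i, t • v ∉ W := by
    simpa [confinedBase, hv] using hvW
  refine .inr (mem_iUnion_of_mem i (mem_iUnion₂_of_mem (i := (s, t)) (by simp_all) ?_))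
  exact ⟨t • v, htW, by simp [mul_smul]⟩

lemma measureReal_iUnion_smul_le_confinedBase [MeasurableSpace X] {μ : Measure X}
    [IsFiniteMeasure μ] [SMulInvariantMeasure G X μ] {ι : Type*} [Fintype ι] (S : ι → Finset G)
    (V : ι → Set X) {W : Set X} {η : ℝ} (hW : μ.real Wᶜ ≤ η) :
    μ.real (⋃ i, (S i : Set G) • V i) ≤ μ.real (⋃ i, (S i : Set G) • confinedBase (S i) (V i) W) +
      (∑ i, ((S i).card : ℝ) ^ 2) * η := by
  refine (measureReal_mono (iUnion_smul_subset_confinedBase_union S V W)).trans <|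
    (measureReal_union_le _ _).trans (add_le_add_right ?_ _)
  rw [Finset.sum_mul]
  refine (measureReal_iUnion_fintype_le _).trans (Finset.sum_le_sum fun i _ ↦ ?_)
  calc μ.real (⋃ p ∈ S i ×ˢ S i, (p.1 * p.2⁻¹) • Wᶜ)
      ≤ ∑ p ∈ S i ×ˢ S i, μ.real ((p.1 * p.2⁻¹) • Wᶜ) := measureReal_biUnion_finset_le _ _
    _ = (S i).card ^ 2 * μ.real Wᶜ := by simp [measureReal_smul_set, sq]
    _ ≤ (S i).card ^ 2 * η := by gcongr

variable [MetricSpace X] [ContinuousConstSMul G X] {K : Finset G} {δ : ℝ}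
  {ι κ : Type*} {S : ι → Finset G} {V : ι → Set X} {T : κ → Finset G} {U : κ → Set X}
  {W W' : Set X}

lemma smul_closure_confinedBase_subset (S : Finset G) (V W : Set X) :
    (S : Set G) • closure (confinedBase S V W) ⊆ closure W := by
  refine smul_subset_iff.2 fun s hs x hx ↦ ?_
  refine closure_minimal (fun y hy ↦ ?_) (isClosed_closure.preimage (continuous_const_smul s)) hx
  exact subset_closure (mem_iInter₂.1 hy.2 s hs)

variable [CompactSpace X]

lemma IsOpenCastle.confine (h : IsOpenCastle K δ S V) (hW : IsOpen W) :
    IsOpenCastle K δ S fun i ↦ confinedBase (S i) (V i) W where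
  toIsFineCastle := h.toIsFineCastle.mono fun _ ↦ closure_mono inter_subset_left
  isOpen i := (h.isOpen i).inter <|
    isOpen_biInter_finset fun s _ ↦ hW.preimage (continuous_const_smul s)

lemma IsOpenCastle.sumElim_confine (h : IsOpenCastle K δ S V) (h' : IsOpenCastle K δ T U)
    (hW : IsOpen W) (hW' : IsOpen W') (hdisj : Disjoint (closure W) (closure W')) :
    IsOpenCastle K δ (Sum.elim S T) (Sum.elim (fun i ↦ confinedBase (S i) (V i) W)
      fun j ↦ confinedBase (T j) (U j) W') where
  toIsFineCastle := by
    convert (h.confine hW).toIsFineCastle.sumElim (h'.confine hW').toIsFineCastle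
      (hdisj.mono (iUnion_subset fun i ↦ smul_closure_confinedBase_subset _ _ _)
        (iUnion_subset fun j ↦ smul_closure_confinedBase_subset _ _ _)) with i
    cases i <;> rfl
  isOpen := Sum.rec (h.confine hW).isOpen (h'.confine hW').isOpen

variable [MeasurableSpace X] {c c' : ℝ} {A B : Set (ProbabilityMeasure X)}

variable [BorelSpace X]

lemma HasOpenCastle.union (hAB : AlmostSeparated A B) (hAG : A ⊆ MG G X) (hBG : B ⊆ MG G X)
    (h : HasOpenCastle K δ c A) (h' : HasOpenCastle K δ c B) (hc : c' < c) :
    HasOpenCastle K δ c' (A ∪ B) := by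
  obtain ⟨m, S, V, hV, hA⟩ := h
  obtain ⟨n, T, U, hU, hB⟩ := h'
  have hsmall (a : ℝ) : ∀ᶠ η in 𝓝[>] 0, a * η < c - c' := by
    have h0 : Tendsto (a * ·) (𝓝[>] 0) (𝓝 0) :=
      ((continuous_const_mul a).tendsto' 0 0 (mul_zero a)).mono_left nhdsWithin_le_nhds
    exact h0.eventually_lt_const (sub_pos.2 hc)
  obtain ⟨η, ⟨hSη, hTη⟩, hη⟩ := (((hsmall (∑ i, ((S i).card : ℝ) ^ 2)).and
    (hsmall (∑ j, ((T j).card : ℝ) ^ 2))).and self_mem_nhdsWithin).exists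
  obtain ⟨W, W', hW, hW', hdisj, hAW, hBW⟩ := hAB η hη
  refine (hV.sumElim_confine hU hW hW' hdisj).hasOpenCastle ?_
  rw [iUnion_sum]
  simp only [Sum.elim_inl, Sum.elim_inr]
  rintro μ (hμ | hμ)
  · have := smulInvariantMeasure_of_mem_MG (hAG hμ)
    refine lt_of_lt_of_le ?_ (measureReal_mono subset_union_left)
    linarith [hA μ hμ, measureReal_iUnion_smul_le_confinedBase S V (hAW μ hμ)]
  · have := smulInvariantMeasure_of_mem_MG (hBG hμ)
    refine lt_of_lt_of_le ?_ (measureReal_mono subset_union_right)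
    linarith [hB μ hμ, measureReal_iUnion_smul_le_confinedBase T U (hBW μ hμ)]

lemma exists_isClopen_hasOpenCastle (hG : AmenableGroup G) (hfree : FreeAction G X)
    [TotallyDisconnectedSpace (EG G X)] [CompactSpace (EG G X)] (K : Finset G) (hδ : 0 < δ)
    (hc : c < 1) (μ : EG G X) :
    ∃ N : Set (EG G X), IsClopen N ∧ μ ∈ N ∧ HasOpenCastle K δ c (Subtype.val '' N) := by
  have := smulInvariantMeasure_of_mem_MG μ.2.1
  obtain ⟨n, S, V, hV, hμ⟩ := exists_isOpenCastle_lt_measureReal hG hfree K hδ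
    ((μ : ProbabilityMeasure X) : Measure X) hc
  have hev := continuous_subtype_val.continuousAt.eventually <|
    eventually_lt_measureReal_of_isOpen (isOpen_iUnion fun i ↦ (hV.isOpen i).smul_left) hμ
  obtain ⟨N, ⟨hμN, hN⟩, hsub⟩ := (nhds_basis_clopen μ).mem_iff.1 hev
  exact ⟨N, hN, hμN, n, S, V, hV, forall_mem_image.2 fun ν hν ↦ hsub hν⟩

theorem hasOpenCastle_EG [Countable G] (hG : AmenableGroup G) (hfree : FreeAction G X)
    (hcpt : IsCompact (EG G X)) (hzd : IsTotallyDisconnected (EG G X)) (K : Finset G) (hδ : 0 < δ)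
    (hc : c < 1) : HasOpenCastle K δ c (EG G X) := by
  have := isCompact_iff_compactSpace.1 hcpt
  have := totallyDisconnectedSpace_subtype_iff.2 hzd
  have hEG (N : Set (EG G X)) : Subtype.val '' N ⊆ EG G X := Subtype.coe_image_subset _ N
  -- The constant `c'` is existentially quantified since every gluing loses a little measure.
  have hloc : ∃ N : Set (EG G X), IsClopen N ∧ univ ⊆ N ∧
      ∃ c' > c, HasOpenCastle K δ c' (Subtype.val '' N) := by
    refine isCompact_univ.induction_on ⟨∅, isClopen_empty, subset_rfl, c + 1, by simp, ?_⟩ ?_ ?_ ?_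
    · simpa using hasOpenCastle_empty
    · rintro s t hst ⟨N, hN, ht, h⟩
      exact ⟨N, hN, hst.trans ht, h⟩
    · rintro s t ⟨N, hN, hs, c₁, hc₁, h₁⟩ ⟨N', hN', ht, c₂, hc₂, h₂⟩
      obtain ⟨c', hcc', hc'⟩ := exists_between (lt_min hc₁ hc₂)
      refine ⟨N ∪ N', hN.union hN', union_subset_union hs ht, c', hcc', ?_⟩
      rw [← union_sdiff_self, image_union]
      refine .union (almostSeparated_of_subset_EG hG hcpt
        (hN.isClosed.isCompact.image continuous_subtype_val)
        ((hN'.diff hN).isClosed.isCompact.image continuous_subtype_val) (hEG _) (hEG _) ?_)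
        ((hEG _).trans fun _ ↦ And.left) ((hEG _).trans fun _ ↦ And.left)
        (h₁.mono (min_le_left _ _) subset_rfl)
        (h₂.mono (min_le_right _ _) (image_mono sdiff_subset)) hc'
      exact (disjoint_image_iff Subtype.val_injective).2 disjoint_sdiff_right
    · obtain ⟨c', hcc', hc'⟩ := exists_between hc
      intro μ _
      obtain ⟨N, hN, hμN, h⟩ := exists_isClopen_hasOpenCastle hG hfree K hδ hc' μ
      exact ⟨N, mem_nhdsWithin_of_mem_nhds (hN.isOpen.mem_nhds hμN), N, hN, subset_rfl, c', hcc', h⟩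
  obtain ⟨N, -, hN, c', hc', h⟩ := hloc
  exact h.mono hc'.le fun μ hμ ↦ ⟨⟨μ, hμ⟩, hN (mem_univ _), rfl⟩

end Gluing

section KreinMilman

open ProbabilityTheory
open scoped NNReal

variable [TopologicalSpace X] [MeasurableSpace X]

/-- A probability measure as a point of the locally convex space `C(X, ℝ) → ℝ`, where the
Krein–Milman theorem applies. -/
noncomputable def integralFunctional (μ : ProbabilityMeasure X) (f : C(X, ℝ)) : ℝ :=
  ∫ x, f x ∂(μ : Measure X)

variable [BorelSpace X]

lemma continuous_integralFunctional [CompactSpace X] :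
    Continuous (integralFunctional : ProbabilityMeasure X → C(X, ℝ) → ℝ) :=
  continuous_pi fun f ↦ ProbabilityMeasure.continuous_integral_continuousMap f

lemma map_smul_cond_eq [Group G] [MulAction G X] [ContinuousConstSMul G X]
    {μ : ProbabilityMeasure X} (hμ : μ ∈ MG G X) {A : Set X} (hA : MeasurableSet A)
    (hinv : ∀ g : G, g • A = A) (g : G) :
    ((μ : Measure X)[|A]).map (g • ·) = (μ : Measure X)[|A] := by
  ext s hs
  have hpre : (g • · : X → X) ⁻¹' A = A := by rw [preimage_smul, hinv]
  rw [Measure.map_apply (by fun_prop) hs, cond_apply hA, cond_apply hA, ← hpre, ← preimage_inter,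
    ← Measure.map_apply (by fun_prop) (hA.inter hs), hμ g, hpre]

variable [HasOuterApproxClosed X]

lemma integralFunctional_injective :
    Function.Injective (integralFunctional : ProbabilityMeasure X → C(X, ℝ) → ℝ) := by
  intro μ ν h
  by_contra hne
  obtain ⟨f, hf⟩ := exists_integral_continuousMap_lt hne
  exact hf.ne (congrFun h f)

variable [CompactSpace X]

lemma integralFunctional_mem_openSegment_iff {μ ν ν' : ProbabilityMeasure X} :
    integralFunctional μ ∈ openSegment ℝ (integralFunctional ν) (integralFunctional ν') ↔
      ∃ a b : ℝ≥0, 0 < a ∧ 0 < b ∧ a + b = 1 ∧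
        (μ : Measure X) = a • (ν : Measure X) + b • (ν' : Measure X) := by
  have hint (a b : ℝ≥0) (f : C(X, ℝ)) :
      ∫ x, f x ∂(a • (ν : Measure X) + b • (ν' : Measure X)) =
        a * integralFunctional ν f + b * integralFunctional ν' f := by
    have hf (ρ : Measure X) [IsFiniteMeasure ρ] : Integrable f ρ :=
      memLp_one_iff_integrable.1 (f.memLp ρ ℝ)
    rw [integral_add_measure (hf _) (hf _), integral_smul_nnreal_measure,
      integral_smul_nnreal_measure]
    rfl
  constructor
  · rintro ⟨a, b, ha, hb, hab, h⟩
    lift a to ℝ≥0 using ha.le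
    lift b to ℝ≥0 using hb.le
    refine ⟨a, b, ha, hb, by exact_mod_cast hab, ?_⟩
    have : IsFiniteMeasure (μ : Measure X) := inferInstance
    refine ext_of_forall_integral_eq_of_IsFiniteMeasure (μ := (μ : Measure X)) fun f ↦ ?_
    exact (congrFun h f.toContinuousMap).symm.trans (hint a b f.toContinuousMap).symm
  · rintro ⟨a, b, ha, hb, hab, h⟩
    refine ⟨a, b, ha, hb, by exact_mod_cast hab, funext fun f ↦ ?_⟩
    rw [integralFunctional, h, hint]
    rfl

variable [Group G] [MulAction G X]

lemma isExtreme_integralFunctional_image_setOf_le {C : Set X} {M : ℝ}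
    (hM : ∀ ν ∈ MG G X, (ν : Measure X).real C ≤ M) :
    IsExtreme ℝ (integralFunctional '' MG G X)
      (integralFunctional '' {ν ∈ MG G X | M ≤ (ν : Measure X).real C}) := by
  refine ⟨image_mono (sep_subset _ _), ?_⟩
  rintro _ ⟨ν, hν, rfl⟩ _ ⟨ν', hν', rfl⟩ _ ⟨μ, ⟨-, hμ⟩, rfl⟩ hseg
  refine mem_image_of_mem _ ⟨hν, ?_⟩
  obtain ⟨a, b, ha, hb, hab, h⟩ := integralFunctional_mem_openSegment_iff.1 hseg
  have hC : (μ : Measure X).real C =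
      a * (ν : Measure X).real C + b * (ν' : Measure X).real C := by
    rw [h, measureReal_add_apply, measureReal_nnreal_smul_apply, measureReal_nnreal_smul_apply]
  have hab' : (a : ℝ) + b = 1 := mod_cast hab
  have hle : b * (ν' : Measure X).real C ≤ b * M := by gcongr; exact hM ν' hν'
  refine le_of_mul_le_mul_left (a := (a : ℝ)) ?_ ha
  linarith [congrArg (· * M) hab']

variable [ContinuousConstSMul G X]

theorem mem_EG_of_integralFunctional_mem_extremePoints {μ : ProbabilityMeasure X}
    (h : integralFunctional μ ∈ (integralFunctional '' MG G X).extremePoints ℝ) : μ ∈ EG G X := by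
  have hμ : μ ∈ MG G X := (integralFunctional_injective.mem_set_image).1 h.1
  refine ⟨hμ, fun A hA hinv ↦ or_iff_not_imp_left.2 fun h0 ↦ by_contra fun h1 ↦ ?_⟩
  have hinvc (g : G) : g • Aᶜ = Aᶜ := by rw [smul_set_compl, hinv]
  have hadd : μ A + μ Aᶜ = 1 := by
    simpa [← ENNReal.coe_inj] using prob_add_prob_compl (μ := (μ : Measure X)) hA
  have hc0 : μ Aᶜ ≠ 0 := fun hc ↦ h1 (by simpa [hc] using hadd)
  have hne {B : Set X} (hB : μ B ≠ 0) : (μ : Measure X) B ≠ 0 :=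
    mt (μ.null_iff_toMeasure_null B).2 hB
  have := cond_isProbabilityMeasure (hne h0)
  have := cond_isProbabilityMeasure (hne hc0)
  let ν : ProbabilityMeasure X := ⟨(μ : Measure X)[|A], inferInstance⟩
  let ν' : ProbabilityMeasure X := ⟨(μ : Measure X)[|Aᶜ], inferInstance⟩
  have hseg : integralFunctional μ ∈ openSegment ℝ (integralFunctional ν) (integralFunctional ν') :=
    integralFunctional_mem_openSegment_iff.2 ⟨μ A, μ Aᶜ, pos_iff_ne_zero.2 h0,
      pos_iff_ne_zero.2 hc0, hadd, Measure.ext fun s _ ↦ by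
        simp [ν, ν', ← cond_add_cond_compl_eq hA (μ : Measure X) (t := s), ENNReal.smul_def,
          mul_comm]⟩
  have hνG : ν ∈ MG G X := map_smul_cond_eq hμ hA hinv
  have hνG' : ν' ∈ MG G X := map_smul_cond_eq hμ hA.compl hinvc
  have hν : ν = μ := integralFunctional_injective <|
    h.2 (mem_image_of_mem _ hνG) (mem_image_of_mem _ hνG') hseg
  refine h1 ?_
  rw [← hν, ← ENNReal.coe_inj, ProbabilityMeasure.ennreal_coeFn_eq_coeFn_toMeasure]
  exact cond_apply_self (hne h0) (measure_ne_top _ _)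

theorem measureReal_lt_of_forall_mem_EG [T2Space X] {C : Set X} (hC : IsClosed C) {a : ℝ}
    (h : ∀ ν ∈ EG G X, (ν : Measure X).real C < a) {μ : ProbabilityMeasure X} (hμ : μ ∈ MG G X) :
    (μ : Measure X).real C < a := by
  by_contra! hμC
  have husc : UpperSemicontinuousOn (fun ν : ProbabilityMeasure X ↦ (ν : Measure X).real C)
      (MG G X) := fun ν _ b hb ↦
    mem_nhdsWithin_of_mem_nhds (eventually_measureReal_lt_of_isClosed hC hb)
  obtain ⟨μ₁, hμ₁, hmax⟩ := husc.exists_isMaxOn ⟨μ, hμ⟩ isClosed_MG.isCompact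
  set M := (μ₁ : Measure X).real C
  have hclosed : IsClosed {ν : ProbabilityMeasure X | M ≤ (ν : Measure X).real C} := by
    refine isOpen_compl_iff.1 (isOpen_iff_mem_nhds.2 fun ν hν ↦ ?_)
    filter_upwards [eventually_measureReal_lt_of_isClosed hC (not_le.1 hν)] with ν' hν'
      using not_le.2 hν'
  obtain ⟨_, hy⟩ := ((isClosed_MG.inter hclosed).isCompact.image
    continuous_integralFunctional).extremePoints_nonempty ⟨_, mem_image_of_mem _ ⟨hμ₁, le_refl M⟩⟩
  obtain ⟨ν, ⟨-, hνM⟩, rfl⟩ := hy.1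
  have hνE := mem_EG_of_integralFunctional_mem_extremePoints <|
    (isExtreme_integralFunctional_image_setOf_le hmax).extremePoints_subset_extremePoints hy
  exact (h ν hνE).not_ge (hμC.trans ((hmax hμ).trans hνM))

end KreinMilman

lemma iUnion_finset_map_smul {ι α : Type*} {β : ι → Type*} [SMul α X] [∀ i, Fintype (β i)]
    (f : ∀ i, β i ↪ α) (V : ι → Set X) :
    ⋃ i, ((Finset.univ.map (f i) : Finset α) : Set α) • V i = ⋃ i, ⋃ p, f i p • V i := by
  simp [← iUnion_smul_set]

section AlmostFiniteOfComparison

variable [Group G] [MulAction G X] [MetricSpace X]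

theorem hasOpenCastle_MG [CompactSpace X] [ContinuousConstSMul G X] [MeasurableSpace X]
    [BorelSpace X] [Countable G] (hG : AmenableGroup G) (hfree : FreeAction G X)
    (hcpt : IsCompact (EG G X)) (hzd : IsTotallyDisconnected (EG G X)) (K : Finset G) {δ c : ℝ}
    (hδ : 0 < δ) (hc : c < 1) : HasOpenCastle K δ c (MG G X) := by
  obtain ⟨n, S, V, hV, hEG⟩ := hasOpenCastle_EG hG hfree hcpt hzd K hδ hc
  refine ⟨n, S, V, hV, fun μ hμ ↦ ?_⟩
  have hO : IsOpen (⋃ i, (S i : Set G) • V i) := isOpen_iUnion fun i ↦ (hV.isOpen i).smul_left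
  have hcompl := measureReal_lt_of_forall_mem_EG hO.isClosed_compl (a := 1 - c) (fun ν hν ↦ by
    rw [probReal_compl_eq_one_sub hO.measurableSet]
    linarith [hEG ν hν]) hμ
  rw [probReal_compl_eq_one_sub hO.measurableSet] at hcompl
  linarith

lemma IsFineCastle.measureReal_compl_lt [MeasurableSpace X] [MeasurableConstSMul G X]
    {K : Finset G} {δ a : ℝ} {ι : Type*} [Finite ι] {S T : ι → Finset G} {B : ι → Set X}
    (h : IsFineCastle K δ S B) (hB : ∀ i, MeasurableSet (B i)) (hT : ∀ i, T i ⊆ S i) (ha : 0 < a)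
    (hcard : ∀ i, (S i).card ≤ a * (T i).card) {μ : Measure X} [SMulInvariantMeasure G X μ]
    [IsProbabilityMeasure μ] (hμ : a / (a + 1) < μ.real (⋃ i, (S i : Set G) • B i)) :
    μ.real (⋃ i, (S i : Set G) • B i)ᶜ < μ.real (⋃ i, (T i : Set G) • B i) := by
  have := Fintype.ofFinite ι
  have hle : μ.real (⋃ i, (S i : Set G) • B i) ≤ a * μ.real (⋃ i, (T i : Set G) • B i) := by
    rw [h.measureReal_iUnion hB, h.measureReal_iUnion_of_subset hT hB, Finset.mul_sum]
    refine Finset.sum_le_sum fun i _ ↦ ?_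
    rw [← mul_assoc]
    exact mul_le_mul_of_nonneg_right (hcard i) measureReal_nonneg
  rw [probReal_compl_eq_one_sub (.iUnion fun i ↦ measurableSet_finset_smul _ (hB i))]
  rw [div_lt_iff₀ (by positivity)] at hμ
  refine lt_of_mul_lt_mul_left ?_ ha.le
  linarith

lemma exists_blocks_embedding {α : Type*} (S : Finset α) {n b : ℕ} (hn : 0 < n) (hb : 0 < b)
    (hS : S.Nonempty → n * b ≤ S.card) : ∃ (k : ℕ) (e : Fin b × Fin k ↪ α),
      (∀ p, e p ∈ S) ∧ n * (b * k) ≤ S.card ∧ S.card ≤ 2 * (n * b) * k := by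
  have hnb : 0 < n * b := mul_pos hn hb
  have hdiv : n * (b * (S.card / (n * b))) ≤ S.card := by
    rw [← mul_assoc]
    exact Nat.mul_div_le _ _
  obtain ⟨e⟩ : Nonempty (Fin b × Fin (S.card / (n * b)) ↪ S) :=
    Function.Embedding.nonempty_of_card_le (by simpa using (Nat.le_mul_of_pos_left _ hn).trans hdiv)
  refine ⟨_, e.trans (.subtype _), fun p ↦ (e p).2, hdiv, ?_⟩
  rcases S.eq_empty_or_nonempty with rfl | hne
  · simp
  · have hpos : n * b * 1 ≤ n * b * (S.card / (n * b)) := by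
      gcongr
      exact (Nat.one_le_div_iff hnb).2 (hS hne)
    linarith [Nat.div_add_mod S.card (n * b), Nat.mod_lt S.card hnb]

/-- The pieces of colour `c` are moved from the levels `e i (0, r)` to the levels `e i (c, r)`, so
that pieces of different colours become disjoint. -/
lemma SubordinateM.spread_colours [ContinuousConstSMul G X] {m : ℕ} {R : Set X} {ι : Type*}
    [Finite ι] {k : ι → ℕ} {S : ι → Finset G} {V : ι → Set X} (hV : ∀ i, IsOpen (V i))
    (htower : ∀ i, IsTower G X (S i) (V i))
    (hdisj : Pairwise fun i j ↦ Disjoint ((S i : Set G) • V i) ((S j : Set G) • V j))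
    (e : ∀ i, Fin (m + 1) × Fin (k i) ↪ G) (he : ∀ i p, e i p ∈ S i)
    (h : SubordinateM G X m R (⋃ i, ⋃ r, e i (0, r) • V i)) :
    SubordinateM G X 0 R (⋃ i, ⋃ p, e i p • V i) := by
  obtain ⟨N, U, s, c, hU, hcov, hsub, hUd⟩ := h
  refine .of_relocation hV htower (c := fun _ ↦ 0) (fun i j hij _ ↦ hdisj hij)
    (α := Fin N × Σ i, Fin (k i)) (U := fun a ↦ U a.1) (g := fun a ↦ s a.1) (i := fun a ↦ a.2.1)
    (t := fun a ↦ e a.2.1 (0, a.2.2)) (r := fun a ↦ e a.2.1 (c a.1, a.2.2)) (fun a ↦ hU a.1)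
    (fun a ↦ he _ _) ?_ (fun a ↦ subset_iUnion₂ (s := fun i p ↦ e i p • V i) a.2.1 _) ?_
  · intro x hx
    obtain ⟨l, hl⟩ := mem_iUnion.1 (hcov hx)
    obtain ⟨i, r, hr⟩ := mem_iUnion₂.1 (hsub l (smul_mem_smul_set hl))
    exact mem_iUnion.2 ⟨(l, ⟨i, r⟩), hl, mem_inv_smul_set_iff.2 hr⟩
  · rintro ⟨l, i, r⟩ ⟨l', i', r'⟩ hne (rfl : i = i') hlevel
    obtain ⟨hc, rfl⟩ := Prod.mk_inj.1 ((e i).injective hlevel)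
    exact ⟨rfl, hUd l l' (fun hl ↦ hne (by rw [hl])) hc⟩

lemma exists_isOpenCastle_card_ge [Infinite G] {K : Finset G} {δ c : ℝ} [MeasurableSpace X]
    {A : Set (ProbabilityMeasure X)} (h : ∀ (L : Finset G) (η : ℝ), 0 < η → HasOpenCastle L η c A)
    (hδ : 0 < δ) (q : ℕ) : ∃ (I : ℕ) (S : Fin I → Finset G) (V : Fin I → Set X),
      IsOpenCastle K δ S V ∧ (∀ i, (S i).Nonempty → q ≤ (S i).card) ∧
        ∀ μ ∈ A, c < (μ : Measure X).real (⋃ i, (S i : Set G) • V i) := by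
  obtain ⟨L, hKL, hL⟩ := Infinite.exists_superset_card_eq K (max K.card q) (le_max_left _ _)
  obtain ⟨I, S, V, hSV, hμ⟩ := h L (min δ (1 / 2)) (lt_min hδ (by norm_num))
  refine ⟨I, S, V, ⟨⟨fun i ↦ (hSV.folnerInv i).mono hKL (min_le_left _ _), hSV.isTower,
    fun i s hs ↦ (hSV.diam_lt i s hs).trans_le (min_le_left _ _), hSV.disjoint⟩, hSV.isOpen⟩,
    fun i hi ↦ (le_max_right K.card q).trans (hL ▸ (hSV.folnerInv i).card_le ?_ hi), hμ⟩
  exact (min_le_right _ _).trans_lt (by norm_num)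

theorem mAlmostFinite_zero_of_hasMComparison [CompactSpace X] [ContinuousConstSMul G X]
    [MeasurableSpace X] [BorelSpace X] [Countable G] [Infinite G] (hG : AmenableGroup G)
    (hfree : FreeAction G X) (hcpt : IsCompact (EG G X)) (hzd : IsTotallyDisconnected (EG G X))
    {m : ℕ} (hcomp : HasMComparison G X m) : MAlmostFinite G X 0 := by
  intro n hn K δ hδ
  set a : ℝ := 2 * (n * (m + 1)) with ha_def
  have ha : 0 < a := by positivity
  obtain ⟨I, S, V, hSV, hcard, hμ⟩ := exists_isOpenCastle_card_ge (K := K)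
    (fun L η hη ↦ hasOpenCastle_MG hG hfree hcpt hzd L hη ((div_lt_one (by positivity)).2
      (lt_add_one a))) hδ (n * (m + 1))
  choose k e heS hek hke using fun i ↦ exists_blocks_embedding (S i) hn m.succ_pos (hcard i)
  let e₀ (i) : Fin (k i) ↪ G := (Function.Embedding.sectR 0 _).trans (e i)
  have hcastle := hSV.toIsFineCastle.mono fun _ ↦ subset_closure
  have hrem : SubordinateM G X m (⋃ i, (S i : Set G) • V i)ᶜ
      (⋃ i, ((Finset.univ.map (e₀ i) : Finset G) : Set G) • V i) := by
    refine hcomp _ _ (isOpen_iUnion fun i ↦ (hSV.isOpen i).smul_left).isClosed_compl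
      (isOpen_iUnion fun i ↦ (hSV.isOpen i).smul_left) fun μ hμM ↦ ?_
    have := smulInvariantMeasure_of_mem_MG hμM
    refine NNReal.coe_lt_coe.1 (hcastle.measureReal_compl_lt
      (fun i ↦ (hSV.isOpen i).measurableSet) (fun i ↦ ?_) ha (fun i ↦ ?_) (hμ μ hμM))
    · exact Finset.map_subset_iff_subset_preimage.2 fun r _ ↦ by simpa [e₀] using heS i (0, r)
    · simpa [ha_def] using (mod_cast hke i : ((S i).card : ℝ) ≤ 2 * (n * (m + 1)) * k i)
  rw [iUnion_finset_map_smul] at hrem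
  refine ⟨I, S, V, fun _ ↦ 0, fun i ↦ Finset.univ.map (e i), hSV.isOpen, hSV.isTower,
    hSV.folnerInv, hSV.diam_lt, fun i j hij _ ↦ hSV.disjoint hij, fun i ↦ ?_, fun i ↦ ?_, ?_⟩
  · intro t ht
    obtain ⟨p, -, rfl⟩ := Finset.mem_map.1 ht
    exact heS i p
  · rw [le_div_iff₀ (mod_cast hn), mul_comm]
    simpa using (mod_cast hek i : (n : ℝ) * ((m + 1) * k i) ≤ (S i).card)
  · rw [← compl_eq_univ_sdiff, iUnion_finset_map_smul]
    exact hrem.spread_colours hSV.isOpen hcastle.isTower hcastle.disjoint e heS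

end AlmostFiniteOfComparison

theorem tfae_almostFinite_comparison_general [Group G] [Countable G] [Infinite G] [MetricSpace X]
    [CompactSpace X] [MeasurableSpace X] [BorelSpace X] [MulAction G X] [ContinuousConstSMul G X]
    (hG : AmenableGroup G) (hfree : FreeAction G X) (hcpt : IsCompact (EG G X))
    (hzd : IsTotallyDisconnected (EG G X)) :
    List.TFAE
      [MAlmostFinite G X 0,
       ∃ m : ℕ, MAlmostFinite G X m,
       HasMComparison G X 0,
       ∃ m : ℕ, HasMComparison G X m] := by
  tfae_have 1 → 2 := fun h ↦ ⟨0, h⟩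
  tfae_have 3 → 4 := fun h ↦ ⟨0, h⟩
  tfae_have 1 → 3 := hasMComparison_of_mAlmostFinite
  tfae_have 2 → 4 := fun ⟨m, h⟩ ↦ ⟨m, hasMComparison_of_mAlmostFinite h⟩
  tfae_have 4 → 1 := fun ⟨_, h⟩ ↦ mAlmostFinite_zero_of_hasMComparison hG hfree hcpt hzd h
  tfae_finish

/-- For a minimal free action with `E_G(X)` compact and zero-dimensional, the
following are equivalent: almost finiteness, `m`-almost finiteness for some `m`, dynamical
comparison, and dynamical `m`-comparison for some `m`. -/
theorem tfae_almostFinite_comparison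
    {G X : Type*} [Group G] [Countable G] [Infinite G]
    [MetricSpace X] [CompactSpace X] [Infinite X]
    [MeasurableSpace X] [BorelSpace X]
    [MulAction G X] [ContinuousConstSMul G X]
    (hG : AmenableGroup G)
    (hfree : FreeAction G X) (hmin : MinimalAction G X)
    (hcpt : IsCompact (EG G X)) (hzd : IsTotallyDisconnected (EG G X)) :
    List.TFAE
      [MAlmostFinite G X 0,
       ∃ m : ℕ, MAlmostFinite G X m,
       HasMComparison G X 0,
       ∃ m : ℕ, HasMComparison G X m] :=
  tfae_almostFinite_comparison_general hG hfree hcpt hzd
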